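/- arXiv:math/0109105 — 2 statements merged into one kernel-verified Lean document; each statement's English description precedes it below -/
import Mathlib

section
/- The abelian group Ext(ℚ, ℤ) is uncountable; in fact it has the cardinality of the continuum. -/
open CategoryTheory

namespace CategoryTheory.ShortComplex

universe v u
open scoped ZeroObject

variable {C : Type u} [Category.{v} C] [Abelian C] (S : ShortComplex C)

/-- The objects of the two-term complex `S.X₁ ⟶ S.X₂`, in degrees `1` and `0`. -/
noncomputable def twoTermX : ℕ → C
  | 0 => S.X₂
  | 1 => S.X₁
  | _ + 2 => 0

/-- The differentials of the two-term complex `S.X₁ ⟶ S.X₂`. -/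
noncomputable def twoTermD : ∀ n, S.twoTermX (n + 1) ⟶ S.twoTermX n
  | 0 => S.f
  | _ + 1 => 0

/-- The chain complex with `S.f : S.X₁ ⟶ S.X₂` in degrees `1` and `0`, and zero elsewhere. -/
noncomputable def twoTermComplex : ChainComplex C ℕ :=
  ChainComplex.of S.twoTermX S.twoTermD fun n => by
    cases n <;> exact Limits.zero_comp

lemma twoTermComplex_d_one_zero : S.twoTermComplex.d 1 0 = S.f :=
  ChainComplex.of_d S.twoTermX S.twoTermD 0

lemma twoTermComplex_d_two_one : S.twoTermComplex.d 2 1 = 0 :=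
  ChainComplex.of_d S.twoTermX S.twoTermD 1

variable {S}

/-- A short exact sequence with projective first two terms is a projective resolution. -/
noncomputable def ShortExact.projectiveResolution (hS : S.ShortExact)
    [Projective S.X₁] [Projective S.X₂] : ProjectiveResolution S.X₃ where
  complex := S.twoTermComplex
  projective n := match n with
    | 0 => inferInstanceAs (Projective S.X₂)
    | 1 => inferInstanceAs (Projective S.X₁)
    | _ + 2 => inferInstanceAs (Projective (0 : C))
  π := (ChainComplex.toSingle₀Equiv _ _).symm ⟨S.g, by
    rw [twoTermComplex_d_one_zero]; exact S.zero⟩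
  quasiIso := ⟨fun n => by
    match n with
    | 0 =>
      rw [ChainComplex.quasiIsoAt₀_iff, ShortComplex.quasiIso_iff_of_zeros']
      · refine (ShortComplex.exact_and_epi_g_iff_of_iso ?_).2 ⟨hS.exact, hS.epi_g⟩
        exact ShortComplex.isoMk (Iso.refl _) (Iso.refl _) (Iso.refl _)
          ((Category.id_comp _).trans (S.twoTermComplex_d_one_zero.symm.trans
            (Category.comp_id _).symm))
          ((Category.id_comp _).trans (Eq.trans
            (ChainComplex.toSingle₀Equiv_symm_apply_f_zero (C := S.twoTermComplex) S.g _).symm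
            (Category.comp_id _).symm))
      all_goals rfl
    | 1 =>
      rw [quasiIsoAt_iff_exactAt' _ _ (ChainComplex.exactAt_succ_single_obj _ _),
        HomologicalComplex.exactAt_iff' _ 2 1 0 (by simp) (by simp)]
      have : Mono (S.twoTermComplex.d 1 0) := by
        rw [twoTermComplex_d_one_zero]; exact hS.mono_f
      exact (ShortComplex.exact_iff_mono _ S.twoTermComplex_d_two_one).2 this
    | n + 2 =>
      rw [quasiIsoAt_iff_exactAt' _ _ (ChainComplex.exactAt_succ_single_obj _ _)]
      exact ShortComplex.exact_of_isZero_X₂ _ (Limits.isZero_zero C)⟩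

/-- For a short exact sequence with projective first two terms, `Ext¹` is the cokernel of
precomposition with `S.f`. -/
theorem ShortExact.exists_surjective_ext_one (R : Type*) [Ring R] [Linear R C]
    [EnoughProjectives C] (hS : S.ShortExact) [Projective S.X₁] [Projective S.X₂] (Y : C) :
    ∃ q : (S.X₁ ⟶ Y) → ((Ext R C 1).obj (Opposite.op S.X₃)).obj Y, Function.Surjective q ∧
      ∀ x y, q x = q y ↔ ∃ h : S.X₂ ⟶ Y, S.f ≫ h = x - y := by
  let K := S.twoTermComplex.linearYonedaObj R Y
  let e : ((Ext R C 1).obj (Opposite.op S.X₃)).obj Y ≅ K.homology 1 :=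
    hS.projectiveResolution.isoExt 1 Y
  have hd : K.d 1 2 = 0 := by
    dsimp only [K]
    rw [ChainComplex.linearYonedaObj_d, twoTermComplex_d_two_one]
    ext x
    exact Limits.zero_comp
  have := K.isIso_homologyι 1 2 (by simp) hd
  let e' := e ≪≫ asIso (K.homologyι 1)
  refine ⟨fun x => e'.inv (K.pOpcycles 1 x), ?_, fun x y => ?_⟩
  · exact ((ModuleCat.epi_iff_surjective e'.inv).1 inferInstance).comp
      ((ModuleCat.epi_iff_surjective (K.pOpcycles 1)).1 inferInstance)
  · rw [((ModuleCat.mono_iff_injective e'.inv).1 inferInstance).eq_iff]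
    refine ((K.sc 1).moduleCat_pOpcycles_eq_iff x y).trans ?_
    change (_ ∈ LinearMap.range (K.d ((ComplexShape.up ℕ).prev 1) 1).hom) ↔ _
    rw [CochainComplex.prev_nat_succ]
    dsimp only [K]
    rw [ChainComplex.linearYonedaObj_d, twoTermComplex_d_one_zero]
    rfl

end CategoryTheory.ShortComplex

/-- The map `ℤ^(ℕ) → ℤ^(ℕ)` sending `eₙ` to `eₙ - (n + 1) eₙ₊₁`. -/
noncomputable def factorialRelation : (ℕ →₀ ℤ) →ₗ[ℤ] (ℕ →₀ ℤ) :=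
  Finsupp.linearCombination ℤ fun n => Finsupp.single n 1 - Finsupp.single (n + 1) ((n : ℤ) + 1)

/-- The map `ℤ^(ℕ) → ℚ` sending `eₙ` to `1 / n!`. -/
noncomputable def invFactorialCombination : (ℕ →₀ ℤ) →ₗ[ℤ] ℚ :=
  Finsupp.linearCombination ℤ fun n => ((n.factorial : ℚ))⁻¹

lemma factorialRelation_single (n : ℕ) (m : ℤ) :
    factorialRelation (Finsupp.single n m) =
      Finsupp.single n m - Finsupp.single (n + 1) (m * (n + 1)) := by
  simp [factorialRelation, smul_sub, -Finsupp.single_add, -Finsupp.single_mul]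

lemma invFactorialCombination_single (n : ℕ) (m : ℤ) :
    invFactorialCombination (Finsupp.single n m) = m / n.factorial := by
  simp [invFactorialCombination, div_eq_mul_inv]

lemma invFactorialCombination_comp_factorialRelation :
    invFactorialCombination ∘ₗ factorialRelation = 0 := by
  ext n
  have : (n.factorial : ℚ) ≠ 0 := by positivity
  simp only [LinearMap.comp_apply, Finsupp.lsingle_apply, factorialRelation_single, map_sub,
    invFactorialCombination_single, Nat.factorial_succ]
  push_cast
  simp only [LinearMap.zero_apply]
  field_simp
  simp

lemma invFactorialCombination_surjective : Function.Surjective invFactorialCombination := by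
  intro r
  refine ⟨Finsupp.single r.den (r.num * (r.den - 1).factorial), ?_⟩
  have h : (r.den.factorial : ℚ) = r.den * (r.den - 1).factorial := by
    exact_mod_cast (Nat.mul_factorial_pred r.den_ne_zero).symm
  have h' : ((r.den - 1).factorial : ℚ) ≠ 0 := by positivity
  rw [invFactorialCombination_single, h]
  push_cast
  rw [mul_div_mul_right _ _ h', Rat.num_div_den]

lemma factorialRelation_apply_zero (c : ℕ →₀ ℤ) : factorialRelation c 0 = c 0 := by
  induction c using Finsupp.induction_linear with
  | zero => simp
  | add f g hf hg => simp [hf, hg]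
  | single n m => simp [factorialRelation_single]

lemma factorialRelation_apply_succ (c : ℕ →₀ ℤ) (k : ℕ) :
    factorialRelation c (k + 1) = c (k + 1) - (k + 1) * c k := by
  induction c using Finsupp.induction_linear with
  | zero => simp
  | add f g hf hg => simp [hf, hg]; ring
  | single n m =>
    simp only [factorialRelation_single, Finsupp.sub_apply, Finsupp.single_apply, add_left_inj]
    split_ifs <;> simp_all [mul_comm]

lemma factorialRelation_injective : Function.Injective factorialRelation := by
  rw [injective_iff_map_eq_zero]
  intro c hc
  ext n
  induction n with
  | zero => simpa [hc] using (factorialRelation_apply_zero c).symm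
  | succ n ih => simpa [hc, ih] using (factorialRelation_apply_succ c n).symm

lemma exists_single_sub_single_mem_range (n k : ℕ) (m : ℤ) :
    ∃ m' : ℤ, Finsupp.single n m - Finsupp.single (n + k) m' ∈
      LinearMap.range factorialRelation := by
  induction k with
  | zero => exact ⟨m, by simp⟩
  | succ k ih =>
    obtain ⟨m', h⟩ := ih
    refine ⟨m' * ((n + k : ℕ) + 1), ?_⟩
    have := add_mem h ⟨_, factorialRelation_single (n + k) m'⟩
    rwa [sub_add_sub_cancel] at this

lemma exists_sub_single_mem_range (c : ℕ →₀ ℤ) :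
    ∃ (n : ℕ) (m : ℤ), c - Finsupp.single n m ∈ LinearMap.range factorialRelation := by
  induction c using Finsupp.induction_linear with
  | zero => exact ⟨0, 0, by simp⟩
  | single n m => exact ⟨n, m, by simp⟩
  | add f g hf hg =>
    obtain ⟨n₁, m₁, h₁⟩ := hf
    obtain ⟨n₂, m₂, h₂⟩ := hg
    obtain ⟨m₁', h₁'⟩ := exists_single_sub_single_mem_range n₁ n₂ m₁
    obtain ⟨m₂', h₂'⟩ := exists_single_sub_single_mem_range n₂ n₁ m₂
    refine ⟨n₁ + n₂, m₁' + m₂', ?_⟩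
    convert add_mem (add_mem h₁ h₁') (add_mem h₂ h₂') using 1
    rw [Finsupp.single_add, add_comm n₂ n₁]
    abel

lemma exact_factorialRelation_invFactorialCombination :
    Function.Exact factorialRelation invFactorialCombination := by
  intro c
  have h0 (x : ℕ →₀ ℤ) : invFactorialCombination (factorialRelation x) = 0 :=
    LinearMap.congr_fun invFactorialCombination_comp_factorialRelation x
  refine ⟨fun hc => ?_, ?_⟩
  · obtain ⟨n, m, x, hx⟩ := exists_sub_single_mem_range c
    have h := h0 x
    rw [hx, map_sub, hc, invFactorialCombination_single, zero_sub, neg_eq_zero,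
      div_eq_zero_iff, or_iff_left (by positivity), Int.cast_eq_zero] at h
    exact ⟨x, by simpa [h] using hx⟩
  · rintro ⟨x, rfl⟩
    exact h0 x

lemma abs_le_of_sub_mul_succ_le_one {b : ℕ → ℤ} (h : ∀ n, |b n - (n + 1) * b (n + 1)| ≤ 1)
    (n : ℕ) : (n + 1) * |b (n + 1)| ≤ |b n| + 1 := by
  have h1 := abs_sub_abs_le_abs_sub ((n + 1) * b (n + 1)) (b n)
  rw [abs_sub_comm, abs_mul, abs_of_nonneg (by positivity : (0 : ℤ) ≤ n + 1)] at h1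
  linarith [h n]

lemma exists_eq_zero_of_sub_mul_succ_le_one {b : ℕ → ℤ}
    (h : ∀ n, |b n - (n + 1) * b (n + 1)| ≤ 1) : ∃ N, ∀ n, N ≤ n → b n = 0 := by
  have h' := abs_le_of_sub_mul_succ_le_one h
  have hB (n : ℕ) : |b n| ≤ |b 0| + 1 := by
    induction n with
    | zero => linarith
    | succ n ih =>
      have := h' n
      rcases n with _ | n
      · simpa using this
      · push_cast at this
        nlinarith [abs_nonneg (b 0), abs_nonneg (b (n + 1 + 1))]
  refine ⟨(b 0).natAbs + 4, fun n hn => ?_⟩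
  obtain ⟨n, rfl⟩ : ∃ k, n = k + 1 := ⟨n - 1, by omega⟩
  by_contra hne
  have h1 := Int.one_le_abs hne
  have h2 := h' n
  have h3 := hB n
  have h4 : |b 0| + 3 ≤ n := by rw [Int.abs_eq_natAbs]; omega
  nlinarith

/-- The morphism `ℤ^(ℕ) → ℤ` taking the value `1` on `eₙ` if `n.unpair.1 ∈ x`,
and `0` otherwise; each value of the indicator is thus repeated infinitely often. -/
noncomputable def repeatedIndicator (x : Set ℕ) : (ℕ →₀ ℤ) →ₗ[ℤ] ℤ :=
  Finsupp.linearCombination ℤ fun n => x.indicator 1 n.unpair.1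

lemma repeatedIndicator_single (x : Set ℕ) (n : ℕ) :
    repeatedIndicator x (Finsupp.single n 1) = x.indicator 1 n.unpair.1 := by
  simp [repeatedIndicator]

lemma eq_of_comp_factorialRelation_eq_sub {x y : Set ℕ} (h : (ℕ →₀ ℤ) →ₗ[ℤ] ℤ)
    (hh : h ∘ₗ factorialRelation = repeatedIndicator x - repeatedIndicator y) : x = y := by
  classical
  let b : ℕ → ℤ := fun n => h (Finsupp.single n 1)
  have hb (n : ℕ) : b n - (n + 1) * b (n + 1) =
      x.indicator 1 n.unpair.1 - y.indicator 1 n.unpair.1 := by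
    have := LinearMap.congr_fun hh (Finsupp.single n 1)
    rw [LinearMap.comp_apply, factorialRelation_single, LinearMap.sub_apply,
      repeatedIndicator_single, repeatedIndicator_single, map_sub, one_mul,
      ← mul_one ((n : ℤ) + 1), ← smul_eq_mul, ← Finsupp.smul_single, map_smul] at this
    exact this
  obtain ⟨N, hN⟩ := exists_eq_zero_of_sub_mul_succ_le_one (b := b) fun n => by
    rw [hb, Set.indicator_apply, Set.indicator_apply]
    split_ifs <;> simp
  ext i
  have hle := Nat.right_le_pair i N
  have := hb (Nat.pair i N)
  rw [hN _ hle, hN _ (by omega), Nat.unpair_pair, Set.indicator_apply, Set.indicator_apply] at this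
  by_cases hx : i ∈ x <;> by_cases hy : i ∈ y <;> simp_all

lemma exists_surjective_ext_rat_int :
    ∃ q : ((ℕ →₀ ℤ) →ₗ[ℤ] ℤ) → ((Ext ℤ (ModuleCat ℤ) 1).obj
        (Opposite.op (ModuleCat.of ℤ ℚ))).obj (ModuleCat.of ℤ ℤ), Function.Surjective q ∧
      ∀ x y, q x = q y ↔ ∃ h : (ℕ →₀ ℤ) →ₗ[ℤ] ℤ, h ∘ₗ factorialRelation = x - y := by
  let S : ShortComplex (ModuleCat ℤ) := ModuleCat.shortComplexOfCompEqZero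
    factorialRelation invFactorialCombination invFactorialCombination_comp_factorialRelation
  have hS : S.ShortExact := ModuleCat.shortComplex_shortExact S
    exact_factorialRelation_invFactorialCombination
    factorialRelation_injective invFactorialCombination_surjective
  have : Projective (ModuleCat.of ℤ (ℕ →₀ ℤ)) :=
    ModuleCat.projective_of_free (Finsupp.basisSingleOne (R := ℤ) (ι := ℕ))
  have : Projective S.X₁ := this
  have : Projective S.X₂ := this
  obtain ⟨q, hq, hq'⟩ := hS.exists_surjective_ext_one ℤ (ModuleCat.of ℤ ℤ)
  refine ⟨fun x => q (ModuleCat.ofHom x), hq.comp ModuleCat.homEquiv.symm.surjective,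
    fun x y => (hq' _ _).trans ⟨?_, ?_⟩⟩
  · rintro ⟨h, hh⟩
    exact ⟨h.hom, congrArg ModuleCat.Hom.hom hh⟩
  · rintro ⟨h, hh⟩
    exact ⟨ModuleCat.ofHom h, congrArg ModuleCat.ofHom hh⟩

lemma mk_finsupp_int_dual_le_continuum :
    Cardinal.mk ((ℕ →₀ ℤ) →ₗ[ℤ] ℤ) ≤ Cardinal.continuum := by
  rw [← Cardinal.mk_congr (Finsupp.lift ℤ ℤ ℕ).toEquiv]
  simp

/-- The abelian group `Ext¹_ℤ(ℚ, ℤ)` (in the category of abelian groups, identified with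
`ℤ`-modules) is uncountable; in fact it has the cardinality of the continuum. -/
theorem stmt0 :
    ¬ Countable (((Ext ℤ (ModuleCat ℤ) 1).obj
        (Opposite.op (ModuleCat.of ℤ ℚ))).obj (ModuleCat.of ℤ ℤ)) ∧
    Cardinal.mk (((Ext ℤ (ModuleCat ℤ) 1).obj
        (Opposite.op (ModuleCat.of ℤ ℚ))).obj (ModuleCat.of ℤ ℤ)) = Cardinal.continuum := by
  obtain ⟨q, hq, hq'⟩ := exists_surjective_ext_rat_int
  have hinj : Function.Injective fun x : Set ℕ => q (repeatedIndicator x) := fun x y hxy => by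
    obtain ⟨h, hh⟩ := (hq' _ _).1 hxy
    exact eq_of_comp_factorialRelation_eq_sub h hh
  have hcard : Cardinal.mk (((Ext ℤ (ModuleCat ℤ) 1).obj
      (Opposite.op (ModuleCat.of ℤ ℚ))).obj (ModuleCat.of ℤ ℤ)) = Cardinal.continuum := by
    refine le_antisymm ((Cardinal.mk_le_of_surjective hq).trans
      mk_finsupp_int_dual_le_continuum) ?_
    simpa using Cardinal.mk_le_of_injective hinj
  refine ⟨fun hc => ?_, hcard⟩
  exact Cardinal.aleph0_lt_continuum.not_ge (hcard ▸ Cardinal.mk_le_aleph0_iff.2 hc)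
end

section
/- The join X ∗ Y of an m-connected space X and an n-connected space Y is (m + n + 2)-connected. -/
open scoped Topology in
/-- A space is `n`-connected if it is nonempty and its homotopy groups (including `π₀`)
vanish in degrees `≤ n`. -/
def IsNConnected (n : ℕ) (X : Type*) [TopologicalSpace X] : Prop :=
  Nonempty X ∧ ∀ (x : X) (i : ℕ), i ≤ n → Subsingleton (π_ i X x)

/-- The relation defining the topological join `X ∗ Y` as a quotient of `X × I × Y`. -/
def joinRel (X Y : Type*) : (X × unitInterval × Y) → (X × unitInterval × Y) → Prop :=
  fun p q => (p.2.1 = 0 ∧ q.2.1 = 0 ∧ p.1 = q.1) ∨ (p.2.1 = 1 ∧ q.2.1 = 1 ∧ p.2.2 = q.2.2)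

/-- The topological join `X ∗ Y`. -/
def Join (X Y : Type*) [TopologicalSpace X] [TopologicalSpace Y] : Type _ :=
  Quot (joinRel X Y)

instance (X Y : Type*) [TopologicalSpace X] [TopologicalSpace Y] :
    TopologicalSpace (Join X Y) := instTopologicalSpaceQuot

section SphereExtension

open Set Metric Topology unitInterval

/-- Every continuous map from the boundary of the cube `[-1, 1]^n` to `X` extends to the cube. -/
def SphereExtends (n : ℕ) (X : Type*) [TopologicalSpace X] : Prop :=
  ∀ f : (Fin n → ℝ) → X, ContinuousOn f (sphere 0 1) →
    ∃ g : (Fin n → ℝ) → X, ContinuousOn g (closedBall 0 1) ∧ EqOn g f (sphere 0 1)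

lemma pi_norm_eq_iff {ι : Type*} [Fintype ι] {R : ℝ} (hR : 0 < R) (z : ι → ℝ) :
    ‖z‖ = R ↔ (∀ i, |z i| ≤ R) ∧ ∃ i, |z i| = R := by
  constructor
  · intro h
    have h1 : ∀ i, |z i| ≤ R := fun i => h ▸ norm_le_pi_norm z i
    refine ⟨h1, ?_⟩
    by_contra! h2
    have := (pi_norm_lt_iff (x := z) hR).2 fun i => lt_of_le_of_ne (h1 i) (h2 i)
    linarith
  · rintro ⟨h1, i, hi⟩
    exact le_antisymm ((pi_norm_le_iff_of_nonneg hR.le).2 h1) (hi ▸ norm_le_pi_norm z i)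

/-- The coordinates of a point of the unit cube, rescaled to `[-1, 1]`. -/
def cubeCoord {k : ℕ} (v : Fin k → I) : Fin k → ℝ := fun i => 2 * (v i : ℝ) - 1

lemma continuous_cubeCoord {k : ℕ} : Continuous (cubeCoord (k := k)) := by
  unfold cubeCoord; fun_prop

lemma cubeCoord_injective {k : ℕ} : Function.Injective (cubeCoord (k := k)) := by
  intro v v' h
  ext i
  have := congrFun h i
  simp only [cubeCoord] at this
  linarith

lemma abs_cubeCoord_le {k : ℕ} (v : Fin k → I) (i : Fin k) : |cubeCoord v i| ≤ 1 := by
  have h0 := (v i).2.1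
  have h1 := (v i).2.2
  simp only [cubeCoord, abs_le]
  constructor <;> linarith

lemma norm_cubeCoord_le {k : ℕ} (v : Fin k → I) : ‖cubeCoord v‖ ≤ 1 :=
  (pi_norm_le_iff_of_nonneg zero_le_one).2 (abs_cubeCoord_le v)

lemma norm_cubeCoord_eq_one_iff {k : ℕ} (v : Fin k → I) :
    ‖cubeCoord v‖ = 1 ↔ v ∈ Cube.boundary (Fin k) := by
  rw [pi_norm_eq_iff one_pos]
  simp only [abs_cubeCoord_le, implies_true, true_and, Cube.boundary, mem_ofPred_eq]
  refine exists_congr fun i => ?_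
  rw [abs_eq zero_le_one, Subtype.ext_iff, Subtype.ext_iff, or_comm]
  simp only [cubeCoord, Icc.coe_zero, Icc.coe_one]
  refine or_congr ⟨fun h => by linarith, fun h => by linarith⟩
    ⟨fun h => by linarith, fun h => by linarith⟩

lemma exists_cubeCoord_eq {k : ℕ} {w : Fin k → ℝ} (hw : ‖w‖ ≤ 1) : ∃ v, cubeCoord v = w := by
  refine ⟨fun i => ⟨(w i + 1) / 2, ?_⟩, ?_⟩
  · have := abs_le.1 ((norm_le_pi_norm w i).trans hw)
    constructor <;> linarith [this.1, this.2]
  · ext i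
    simp only [cubeCoord]
    ring

/-- A map from the `k`-ball to `(k+1)`-space minus the origin, which collapses the boundary of the
ball to a point and is otherwise a bijection onto the rays from the origin. -/
noncomputable def collapse {k : ℕ} (w : Fin k → ℝ) : Fin (k + 1) → ℝ :=
  Fin.cons (1 - 2 * ‖w‖) ((1 - ‖w‖) • w)

lemma continuous_collapse {k : ℕ} : Continuous (collapse (k := k)) := by
  refine continuous_pi fun i => ?_
  refine Fin.cases ?_ (fun j => ?_) i
  · simp only [collapse, Fin.cons_zero]
    fun_prop
  · simp only [collapse, Fin.cons_succ]
    fun_prop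

lemma collapse_of_norm_eq_one {k : ℕ} {w : Fin k → ℝ} (hw : ‖w‖ = 1) :
    collapse w = Fin.cons (-1) 0 := by
  simp only [collapse, hw, sub_self, zero_smul]
  norm_num

lemma collapse_ne_zero {k : ℕ} (w : Fin k → ℝ) : collapse w ≠ 0 := by
  intro h
  have h0 : 1 - 2 * ‖w‖ = 0 := congrFun h 0
  have h1 : (1 - ‖w‖) • w = 0 := by
    ext j
    exact congrFun h j.succ
  have h2 := congrArg norm h1
  rw [norm_smul, norm_zero, Real.norm_eq_abs] at h2
  rw [show ‖w‖ = 1 / 2 by linarith] at h2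
  norm_num at h2

lemma eq_or_of_collapse_eq_smul {k : ℕ} {w w' : Fin k → ℝ} (hw : ‖w‖ ≤ 1) (hw' : ‖w'‖ ≤ 1)
    {c : ℝ} (hc : 0 < c) (h : collapse w = c • collapse w') :
    w = w' ∨ (‖w‖ = 1 ∧ ‖w'‖ = 1) := by
  have h0 : 1 - 2 * ‖w‖ = c * (1 - 2 * ‖w'‖) := congrFun h 0
  have h1 : (1 - ‖w‖) • w = (c * (1 - ‖w'‖)) • w' := by
    ext j
    have := congrFun h j.succ
    simpa [collapse, mul_assoc] using this
  have h2 := congrArg norm h1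
  rw [norm_smul, norm_smul, Real.norm_of_nonneg (by linarith),
    Real.norm_of_nonneg (mul_nonneg hc.le (by linarith))] at h2
  have hn := norm_nonneg w
  have hn' := norm_nonneg w'
  generalize hr : ‖w‖ = r at *
  generalize hr' : ‖w'‖ = r' at *
  have h3 : c * ((r - r') * ((1 - r) * (1 - r') + r * r')) = 0 := by
    linear_combination c * (1 - 2 * r') * h2 - c * (1 - r') * r' * h0
  have h4 : (r - r') * ((1 - r) * (1 - r') + r * r') = 0 := by
    simpa [hc.ne'] using h3
  rcases mul_eq_zero.1 h4 with h5 | h5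
  · have h6 : r = r' := by linarith
    subst h6
    rcases eq_or_lt_of_le hw with h7 | h7
    · exact Or.inr ⟨h7, h7⟩
    · left
      have hc1 : c = 1 := by
        by_cases h8 : 1 - 2 * r = 0
        · have : r = 1 / 2 := by linarith
          rw [this] at h2
          linarith
        · exact mul_right_cancel₀ h8 (by linarith)
      rw [hc1, one_mul] at h1
      exact smul_right_injective _ (by linarith : (1 - r) ≠ 0) h1
  · exfalso
    have h6 : 0 ≤ (1 - r) * (1 - r') := mul_nonneg (by linarith) (by linarith)
    have h7 : 0 ≤ r * r' := mul_nonneg hn hn'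
    have h8 : r * r' = 0 := by linarith
    have h9 : (1 - r) * (1 - r') = 0 := by linarith
    rcases mul_eq_zero.1 h8 with h | h <;> rcases mul_eq_zero.1 h9 with h' | h' <;>
      nlinarith

lemma exists_collapse_eq_smul {k : ℕ} (hk : k ≠ 0) {z : Fin (k + 1) → ℝ} (hz : z ≠ 0) :
    ∃ w : Fin k → ℝ, ‖w‖ ≤ 1 ∧ ∃ c : ℝ, 0 < c ∧ collapse w = c • z := by
  have key : ∀ (w : Fin k → ℝ) (c : ℝ), 1 - 2 * ‖w‖ = c * z 0 →
      (∀ j : Fin k, (1 - ‖w‖) * w j = c * z j.succ) → collapse w = c • z := by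
    intro w c h0 h1
    ext i
    refine Fin.cases ?_ (fun j => ?_) i
    · simpa [collapse] using h0
    · simpa [collapse] using h1 j
  by_cases ha : Fin.tail z = 0
  · have ha' : ∀ j : Fin k, z j.succ = 0 := fun j => congrFun ha j
    have hb : z 0 ≠ 0 := by
      intro hb
      apply hz
      ext i
      exact Fin.cases hb ha' i
    rcases lt_or_gt_of_ne hb with hb | hb
    · have : Nonempty (Fin k) := ⟨⟨0, Nat.pos_of_ne_zero hk⟩⟩
      have hw : ‖(fun _ => 1 : Fin k → ℝ)‖ = 1 := by
        rw [pi_norm_const]; norm_num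
      refine ⟨fun _ => 1, hw.le, (-z 0)⁻¹, by simpa using hb, key _ _ ?_ fun j => ?_⟩
      · rw [hw]
        field_simp
        norm_num
      · rw [hw, ha']
        ring
    · refine ⟨0, by simp, (z 0)⁻¹, by simpa using hb, key _ _ ?_ fun j => ?_⟩
      · simp [hb.ne']
      · rw [ha']
        simp
  · set n := ‖Fin.tail z‖ with hn
    have hn0 : 0 < n := norm_pos_iff.2 ha
    have hcont : ContinuousOn (fun r : ℝ => (1 - r) * r * z 0 - (1 - 2 * r) * n) (Icc 0 1) := by
      fun_prop
    obtain ⟨r, hr, hr0⟩ := intermediate_value_Ioo zero_le_one hcont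
      (show (0 : ℝ) ∈ Ioo _ _ by constructor <;> norm_num <;> exact hn0)
    have hw : ‖(r / n) • Fin.tail z‖ = r := by
      rw [norm_smul, Real.norm_of_nonneg (div_nonneg hr.1.le hn0.le), ← hn]
      field_simp
    refine ⟨(r / n) • Fin.tail z, by rw [hw]; exact hr.2.le, (1 - r) * r / n,
      div_pos (mul_pos (by linarith [hr.2]) hr.1) hn0, key _ _ ?_ fun j => ?_⟩
    · rw [hw]
      field_simp
      simp only at hr0
      linarith
    · rw [hw]
      simp only [Pi.smul_apply, smul_eq_mul, Fin.tail]
      ring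

/-- The map from the cylinder over the `k`-cube onto the `(k+1)`-ball which collapses the lateral
boundary of each slice to a point and the top slice to the centre. -/
noncomputable def cylinderToBall (k : ℕ) (p : I × (Fin k → I)) : Fin (k + 1) → ℝ :=
  ((1 - (p.1 : ℝ)) * ‖collapse (cubeCoord p.2)‖⁻¹) • collapse (cubeCoord p.2)

lemma continuous_cylinderToBall (k : ℕ) : Continuous (cylinderToBall k) := by
  have h : Continuous fun p : I × (Fin k → I) => collapse (cubeCoord p.2) :=
    continuous_collapse.comp (continuous_cubeCoord.comp continuous_snd)
  unfold cylinderToBall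
  exact ((continuous_const.sub (continuous_subtype_val.comp continuous_fst)).mul
    (h.norm.inv₀ fun p => norm_ne_zero_iff.2 (collapse_ne_zero _))).smul h

lemma norm_cylinderToBall (k : ℕ) (p : I × (Fin k → I)) :
    ‖cylinderToBall k p‖ = 1 - (p.1 : ℝ) := by
  have h := norm_pos_iff.2 (collapse_ne_zero (cubeCoord p.2))
  rw [cylinderToBall, norm_smul, Real.norm_of_nonneg
    (mul_nonneg (by linarith [p.1.2.2]) (inv_nonneg.2 h.le)), mul_assoc, inv_mul_cancel₀ h.ne',
    mul_one]

lemma exists_cylinderToBall_eq {k : ℕ} (hk : k ≠ 0) {z : Fin (k + 1) → ℝ} (hz : ‖z‖ ≤ 1) :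
    ∃ p, cylinderToBall k p = z := by
  by_cases h0 : z = 0
  · exact ⟨(1, fun _ => 0), by simp [cylinderToBall, h0]⟩
  · obtain ⟨w, hw, c, hc, h⟩ := exists_collapse_eq_smul hk h0
    obtain ⟨v, rfl⟩ := exists_cubeCoord_eq hw
    refine ⟨(⟨1 - ‖z‖, by linarith, by linarith [norm_nonneg z]⟩, v), ?_⟩
    have hz0 := norm_ne_zero_iff.2 h0
    simp only [cylinderToBall, h, norm_smul, Real.norm_of_nonneg hc.le, smul_smul]
    rw [show (1 - (1 - ‖z‖)) * (c * ‖z‖)⁻¹ * c = 1 by field_simp; ring, one_smul]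

lemma eq_or_of_cylinderToBall_eq {k : ℕ} {p p' : I × (Fin k → I)}
    (h : cylinderToBall k p = cylinderToBall k p') :
    p = p' ∨ (p.1 = 1 ∧ p'.1 = 1) ∨
      (p.2 ∈ Cube.boundary (Fin k) ∧ p'.2 ∈ Cube.boundary (Fin k)) := by
  have h1 : p.1 = p'.1 := by
    have := congrArg norm h
    rw [norm_cylinderToBall, norm_cylinderToBall] at this
    ext
    linarith
  by_cases h2 : p.1 = 1
  · exact Or.inr (Or.inl ⟨h2, h1 ▸ h2⟩)
  · have h3 : (0 : ℝ) < 1 - (p.1 : ℝ) := by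
      have : (p.1 : ℝ) < 1 := lt_of_le_of_ne p.1.2.2 fun h => h2 (Subtype.ext h)
      linarith
    have hn := norm_pos_iff.2 (collapse_ne_zero (cubeCoord p.2))
    have hn' := norm_pos_iff.2 (collapse_ne_zero (cubeCoord p'.2))
    have h4 : collapse (cubeCoord p.2) =
        (‖collapse (cubeCoord p.2)‖ * ‖collapse (cubeCoord p'.2)‖⁻¹) •
          collapse (cubeCoord p'.2) := by
      have := congrArg
        (fun z => (‖collapse (cubeCoord p.2)‖ * (1 - (p.1 : ℝ))⁻¹) • z) h
      simp only [cylinderToBall, smul_smul, ← h1] at this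
      convert this using 2
      · rw [show ‖collapse (cubeCoord p.2)‖ * (1 - (p.1 : ℝ))⁻¹ *
          ((1 - (p.1 : ℝ)) * ‖collapse (cubeCoord p.2)‖⁻¹) = 1 by field_simp, one_smul]
      · field_simp
    rcases eq_or_of_collapse_eq_smul (norm_cubeCoord_le _) (norm_cubeCoord_le _)
      (mul_pos hn (inv_pos.2 hn')) h4 with h5 | h5
    · exact Or.inl (Prod.ext h1 (cubeCoord_injective h5))
    · rw [norm_cubeCoord_eq_one_iff, norm_cubeCoord_eq_one_iff] at h5
      exact Or.inr (Or.inr h5)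

variable {X : Type*} [TopologicalSpace X]

lemma sphereExtends_succ {k : ℕ} (hk : k ≠ 0) (h : ∀ x : X, Subsingleton (π_ k X x)) :
    SphereExtends (k + 1) X := by
  intro f hf
  have hq : ∀ v : Fin k → I, cylinderToBall k (0, v) ∈ sphere (0 : Fin (k + 1) → ℝ) 1 := by
    intro v
    rw [mem_sphere_zero_iff_norm, norm_cylinderToBall]
    simp
  set c : Fin (k + 1) → ℝ := cylinderToBall k (0, fun _ => 0) with hc
  have hbd : ∀ v ∈ Cube.boundary (Fin k), cylinderToBall k (0, v) = c := by
    have h0 : (fun _ => 0 : Fin k → I) ∈ Cube.boundary (Fin k) :=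
      ⟨⟨0, Nat.pos_of_ne_zero hk⟩, Or.inl rfl⟩
    intro v hv
    simp only [hc, cylinderToBall]
    rw [collapse_of_norm_eq_one ((norm_cubeCoord_eq_one_iff v).2 hv),
      collapse_of_norm_eq_one ((norm_cubeCoord_eq_one_iff _).2 h0)]
  let γ : GenLoop (Fin k) X (f c) :=
    ⟨⟨fun v => f (cylinderToBall k (0, v)), hf.comp_continuous
      ((continuous_cylinderToBall k).comp (by fun_prop)) hq⟩,
      fun v hv => congrArg f (hbd v hv)⟩
  have hγ : GenLoop.Homotopic γ GenLoop.const := by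
    have := (h (f c)).elim (Quotient.mk (GenLoop.Homotopic.setoid (Fin k) (f c)) γ)
      (Quotient.mk (GenLoop.Homotopic.setoid (Fin k) (f c)) GenLoop.const)
    exact Quotient.exact this
  obtain ⟨H⟩ := hγ
  have H0 : ∀ v, H (0, v) = f (cylinderToBall k (0, v)) := fun v => H.apply_zero v
  have H1 : ∀ v, H (1, v) = f c := fun v => H.apply_one v
  have Hb : ∀ s, ∀ v ∈ Cube.boundary (Fin k), H (s, v) = f c := fun s v hv =>
    (H.eq_fst s hv).trans (congrArg f (hbd v hv))
  let Θ : I × (Fin k → I) → closedBall (0 : Fin (k + 1) → ℝ) 1 := fun p =>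
    ⟨cylinderToBall k p, by
      rw [mem_closedBall_zero_iff, norm_cylinderToBall]
      linarith [p.1.2.1]⟩
  have hΘs : Function.Surjective Θ := fun z => by
    obtain ⟨p, hp⟩ := exists_cylinderToBall_eq hk (mem_closedBall_zero_iff.1 z.2)
    exact ⟨p, Subtype.ext hp⟩
  have hΘ : IsQuotientMap Θ := IsQuotientMap.of_surjective_continuous hΘs
    ((continuous_cylinderToBall k).subtype_mk _)
  have hfib : ∀ p p', Θ p = Θ p' → H p = H p' := by
    rintro ⟨s, v⟩ ⟨s', v'⟩ hp
    rcases eq_or_of_cylinderToBall_eq (congrArg Subtype.val hp) with h | ⟨h, h'⟩ | ⟨h, h'⟩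
    · rw [h]
    · simp only at h h'
      rw [h, h', H1, H1]
    · rw [Hb _ _ h, Hb _ _ h']
  let g : closedBall (0 : Fin (k + 1) → ℝ) 1 → X := fun z => H (Function.surjInv hΘs z)
  have hgΘ : ∀ p, g (Θ p) = H p := fun p => hfib _ _ (Function.surjInv_eq hΘs _)
  have hg : Continuous g := by
    rw [hΘ.continuous_iff]
    exact (map_continuous H).congr fun p => (hgΘ p).symm
  classical
  refine ⟨fun z => if hz : z ∈ closedBall (0 : Fin (k + 1) → ℝ) 1 then g ⟨z, hz⟩ else f z,
    ?_, ?_⟩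
  · rw [continuousOn_iff_continuous_domRestrict]
    exact hg.congr fun z => by simp [-mem_closedBall]
  · intro z hz
    have hz' := sphere_subset_closedBall hz
    simp only [hz', dif_pos]
    obtain ⟨⟨s, v⟩, hp⟩ := exists_cylinderToBall_eq hk (mem_closedBall_zero_iff.1 hz')
    have hs : s = 0 := by
      have := norm_cylinderToBall k (s, v)
      rw [hp, mem_sphere_zero_iff_norm.1 hz] at this
      ext
      simp only at this
      simp only [Icc.coe_zero]
      linarith
    have : (⟨z, hz'⟩ : closedBall (0 : Fin (k + 1) → ℝ) 1) = Θ (s, v) := Subtype.ext hp.symm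
    rw [this, hgΘ, hs, H0, ← hs, hp]

lemma sphereExtends_zero : SphereExtends 0 X := fun f _ =>
  ⟨f, (Set.subsingleton_of_subsingleton).continuousOn f, fun _ _ => rfl⟩

lemma sphereExtends_one (h : ∀ x : X, Subsingleton (π_ 0 X x)) : SphereExtends 1 X := by
  intro f _
  have hp : Nonempty (Path (f (fun _ => -1)) (f (fun _ => 1))) := by
    have := h (f 0)
    have := (HomotopyGroup.pi0EquivZerothHomotopy (X := X) (x := f 0)).symm.subsingleton
    exact Quotient.exact (this.elim (Quotient.mk (pathSetoid X) (f (fun _ => -1)))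
      (Quotient.mk (pathSetoid X) (f (fun _ => 1))))
  obtain ⟨γ⟩ := hp
  refine ⟨fun z => γ.extend ((z 0 + 1) / 2), (γ.continuous_extend.comp
    (by fun_prop : Continuous fun z : Fin 1 → ℝ => (z 0 + 1) / 2)).continuousOn, ?_⟩
  intro z hz
  rw [mem_sphere_zero_iff_norm, pi_norm_eq_iff one_pos] at hz
  obtain ⟨-, i, hi⟩ := hz
  rw [Subsingleton.elim i 0, abs_eq zero_le_one] at hi
  have hz' : ∀ c : ℝ, z 0 = c → z = fun _ => c := by
    intro c hc
    ext j
    rw [Subsingleton.elim j 0, hc]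
  rcases hi with hi | hi <;> rw [hz' _ hi] <;> norm_num

lemma IsNConnected.sphereExtends {m k : ℕ} (h : IsNConnected m X) (hk : k ≤ m + 1) :
    SphereExtends k X := by
  rcases k with _ | _ | k
  · exact sphereExtends_zero
  · exact sphereExtends_one fun x => h.2 x 0 (Nat.zero_le _)
  · exact sphereExtends_succ k.succ_ne_zero fun x => h.2 x (k + 1) (by omega)

lemma subsingleton_homotopyGroup {k : ℕ} (h : SphereExtends (k + 1) X) (x : X) :
    Subsingleton (π_ k X x) := by
  refine ⟨fun a b => ?_⟩
  induction a using Quotient.inductionOn with | _ γ₀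
  induction b using Quotient.inductionOn with | _ γ₁
  refine Quotient.sound ?_
  classical
  let π : (Fin (k + 1) → ℝ) → (Fin k → I) := fun z j =>
    projIcc (0 : ℝ) 1 zero_le_one ((z j.succ + 1) / 2)
  have hπ : Continuous π := by
    refine continuous_pi fun j => continuous_projIcc.comp (by fun_prop)
  let A : Set (Fin (k + 1) → ℝ) := {z | z 0 = -1}
  let B : Set (Fin (k + 1) → ℝ) := {z | z 0 = 1}
  let D : Set (Fin (k + 1) → ℝ) := {z | ∃ j : Fin k, |z j.succ| = 1}
  have hA : IsClosed A := isClosed_eq (by fun_prop) (by fun_prop)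
  have hB : IsClosed B := isClosed_eq (by fun_prop) (by fun_prop)
  have hD : IsClosed D := by
    have : D = ⋃ j : Fin k, {z | |z j.succ| = 1} := by
      ext z
      simp [D]
    rw [this]
    exact isClosed_iUnion_of_finite fun j => isClosed_eq (by fun_prop) (by fun_prop)
  have hπD : ∀ z ∈ D, π z ∈ Cube.boundary (Fin k) := by
    rintro z ⟨j, hj⟩
    refine ⟨j, ?_⟩
    rcases (abs_eq zero_le_one).1 hj with hj | hj
    · right
      simp [π, hj]
    · left
      simp [π, hj]
  let f : (Fin (k + 1) → ℝ) → X := fun z =>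
    if z 0 = -1 then γ₀ (π z) else if z 0 = 1 then γ₁ (π z) else x
  have fA : EqOn f (fun z => γ₀ (π z)) A := fun z hz => if_pos hz
  have fB : EqOn f (fun z => γ₁ (π z)) B := fun z (hz : z 0 = 1) => by
    simp only [f, hz, if_true]
    rw [if_neg (by norm_num)]
  have fD : EqOn f (fun _ => x) D := fun z hz => by
    simp only [f, GenLoop.boundary γ₀ _ (hπD z hz),
      GenLoop.boundary γ₁ _ (hπD z hz), ite_self]
  have hf : ContinuousOn f (sphere 0 1) := by
    refine ContinuousOn.mono (s := A ∪ B ∪ D) (((?_ : ContinuousOn f A).union_of_isClosed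
      (?_ : ContinuousOn f B) hA hB).union_of_isClosed (?_ : ContinuousOn f D)
      (hA.union hB) hD) ?_
    · exact ((map_continuous γ₀.1).comp hπ).continuousOn.congr fA
    · exact ((map_continuous γ₁.1).comp hπ).continuousOn.congr fB
    · exact continuousOn_const.congr fD
    · intro z hz
      rw [mem_sphere_zero_iff_norm, pi_norm_eq_iff one_pos] at hz
      obtain ⟨-, i, hi⟩ := hz
      revert hi
      refine Fin.cases (fun h0 => ?_) (fun j hj => Or.inr ⟨j, hj⟩) i
      rcases (abs_eq zero_le_one).1 h0 with h | h
      · exact Or.inl (Or.inr h)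
      · exact Or.inl (Or.inl h)
  obtain ⟨g, hg, hgf⟩ := h f hf
  let e : I × (Fin k → I) → (Fin (k + 1) → ℝ) := fun p =>
    Fin.cons (2 * (p.1 : ℝ) - 1) (cubeCoord p.2)
  have he : Continuous e := by
    refine continuous_pi fun i => Fin.cases ?_ (fun j => ?_) i
    · simp only [e, Fin.cons_zero]
      fun_prop
    · simp only [e, Fin.cons_succ, cubeCoord]
      fun_prop
  have hle : ∀ p i, |e p i| ≤ 1 := by
    intro p i
    refine Fin.cases ?_ (fun j => ?_) i
    · simp only [e, Fin.cons_zero, abs_le]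
      constructor <;> linarith [p.1.2.1, p.1.2.2]
    · exact abs_cubeCoord_le p.2 j
  have heb : ∀ p, e p ∈ closedBall (0 : Fin (k + 1) → ℝ) 1 := fun p => by
    rw [mem_closedBall_zero_iff]
    exact (pi_norm_le_iff_of_nonneg zero_le_one).2 (hle p)
  have hes : ∀ p i, |e p i| = 1 → e p ∈ sphere (0 : Fin (k + 1) → ℝ) 1 := fun p i hi => by
    rw [mem_sphere_zero_iff_norm, pi_norm_eq_iff one_pos]
    exact ⟨hle p, i, hi⟩
  have hπe : ∀ p, π (e p) = p.2 := by
    intro p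
    ext j
    have : (e p j.succ + 1) / 2 = p.2 j := by
      simp only [e, Fin.cons_succ, cubeCoord]
      ring
    simp only [π, this, projIcc_val]
  refine ⟨⟨⟨⟨fun p => g (e p), hg.comp_continuous he heb⟩, fun v => ?_, fun v => ?_⟩,
    fun s v hv => ?_⟩⟩
  · have h0 : e (0, v) 0 = -1 := by simp [e]
    have := hgf (hes (0, v) 0 (by rw [h0]; norm_num))
    refine this.trans ((fA h0).trans ?_)
    simp only [hπe]
    rfl
  · have h0 : e (1, v) 0 = 1 := by simp [e]; norm_num
    have := hgf (hes (1, v) 0 (by rw [h0]; norm_num))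
    refine this.trans ((fB h0).trans ?_)
    simp only [hπe]
    rfl
  · have hD : ∃ j : Fin k, |e (s, v) j.succ| = 1 := by
      have := (pi_norm_eq_iff one_pos _).1 ((norm_cubeCoord_eq_one_iff v).2 hv)
      exact this.2
    obtain ⟨j, hj⟩ := hD
    exact (hgf (hes (s, v) j.succ hj)).trans ((fD ⟨j, hj⟩).trans (GenLoop.boundary γ₀ v hv).symm)

/-- The smallest closed cell containing `z` of the cubical decomposition of `ℝ^d` with vertices the
integer points. -/
def carrier {d : ℕ} (z : Fin d → ℝ) : Set (Fin d → ℝ) :=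
  Icc (fun i => (⌊z i⌋ : ℝ)) (fun i => (⌈z i⌉ : ℝ))

/-- The boundary of the smallest closed cell containing `z`. -/
def carrierBoundary {d : ℕ} (z : Fin d → ℝ) : Set (Fin d → ℝ) :=
  {w ∈ carrier z | ∃ i, ⌊z i⌋ ≠ ⌈z i⌉ ∧ (w i = ⌊z i⌋ ∨ w i = ⌈z i⌉)}

/-- The dimension of the smallest closed cell containing `z`. -/
noncomputable def carrierDim {d : ℕ} (z : Fin d → ℝ) : ℕ :=
  Fintype.card {i // ⌊z i⌋ ≠ ⌈z i⌉}

/-- A union of closed cells of the integer cubical decomposition of `ℝ^d`. -/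
def IsCubeComplex {d : ℕ} (K : Set (Fin d → ℝ)) : Prop :=
  ∀ z ∈ K, carrier z ⊆ K

lemma mem_carrier_iff {d : ℕ} {z w : Fin d → ℝ} :
    w ∈ carrier z ↔ ∀ i, ⌊z i⌋ ≤ ⌊w i⌋ ∧ ⌈w i⌉ ≤ ⌈z i⌉ := by
  simp only [carrier, mem_Icc, Pi.le_def, Int.le_floor, Int.ceil_le, forall_and]

lemma mem_carrier_self {d : ℕ} (z : Fin d → ℝ) : z ∈ carrier z :=
  mem_carrier_iff.2 fun _ => ⟨le_rfl, le_rfl⟩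

lemma carrier_subset_carrier {d : ℕ} {z w : Fin d → ℝ} (h : w ∈ carrier z) :
    carrier w ⊆ carrier z := by
  intro u hu
  rw [mem_carrier_iff] at *
  exact fun i => ⟨(h i).1.trans (hu i).1, (hu i).2.trans (h i).2⟩

lemma isClosed_carrier {d : ℕ} (z : Fin d → ℝ) : IsClosed (carrier z) := isClosed_Icc

lemma IsCubeComplex.union {d : ℕ} {K L : Set (Fin d → ℝ)} (hK : IsCubeComplex K)
    (hL : IsCubeComplex L) : IsCubeComplex (K ∪ L) := by
  rintro z (hz | hz)
  · exact (hK z hz).trans subset_union_left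
  · exact (hL z hz).trans subset_union_right

lemma IsCubeComplex.inter {d : ℕ} {K L : Set (Fin d → ℝ)} (hK : IsCubeComplex K)
    (hL : IsCubeComplex L) : IsCubeComplex (K ∩ L) :=
  fun z hz => subset_inter (hK z hz.1) (hL z hz.2)

lemma isCubeComplex_carrier {d : ℕ} (z : Fin d → ℝ) : IsCubeComplex (carrier z) :=
  fun _ hw => carrier_subset_carrier hw

/-- The vertices spanning the smallest closed cell containing `z`. -/
noncomputable def carrierEnds {d : ℕ} (z : Fin d → ℝ) : (Fin d → ℤ) × (Fin d → ℤ) :=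
  (fun i => ⌊z i⌋, fun i => ⌈z i⌉)

lemma mem_carrier_of_carrierEnds_eq {d : ℕ} {z w : Fin d → ℝ}
    (h : carrierEnds w = carrierEnds z) : w ∈ carrier z := by
  rw [mem_carrier_iff]
  intro i
  have h1 : ⌊w i⌋ = ⌊z i⌋ := congrFun (congrArg Prod.fst h) i
  have h2 : ⌈w i⌉ = ⌈z i⌉ := congrFun (congrArg Prod.snd h) i
  exact ⟨h1.ge, h2.le⟩

lemma finite_carrierEnds {d M : ℕ} {K : Set (Fin d → ℝ)} (hK : K ⊆ closedBall 0 M) :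
    (carrierEnds '' K).Finite := by
  have hfin := Set.finite_Icc (fun _ : Fin d => -(M : ℤ)) (fun _ => (M : ℤ))
  refine (hfin.prod hfin).subset ?_
  rintro _ ⟨z, hz, rfl⟩
  have h : ∀ i, -(M : ℝ) ≤ z i ∧ z i ≤ M := fun i =>
    abs_le.1 ((norm_le_pi_norm z i).trans (mem_closedBall_zero_iff.1 (hK hz)))
  have h1 : ∀ i, -(M : ℤ) ≤ ⌊z i⌋ := fun i => Int.le_floor.2 (by push_cast; exact (h i).1)
  have h2 : ∀ i, ⌈z i⌉ ≤ (M : ℤ) := fun i => Int.ceil_le.2 (by push_cast; exact (h i).2)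
  exact ⟨⟨h1, fun i => (Int.floor_le_ceil _).trans (h2 i)⟩,
    ⟨fun i => (h1 i).trans (Int.floor_le_ceil _), h2⟩⟩

lemma IsCubeComplex.isClosed {d M : ℕ} {K : Set (Fin d → ℝ)} (hK : IsCubeComplex K)
    (hM : K ⊆ closedBall 0 M) : IsClosed K := by
  have : K = ⋃ p ∈ carrierEnds '' K,
      Icc (fun i => (p.1 i : ℝ)) (fun i => (p.2 i : ℝ)) := by
    rw [biUnion_image]
    refine Subset.antisymm (fun z hz => mem_biUnion hz (mem_carrier_self z)) ?_
    exact iUnion₂_subset fun z hz => hK z hz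
  rw [this]
  exact (finite_carrierEnds hM).isClosed_biUnion fun p _ => isClosed_Icc

lemma exists_extension_carrier {d : ℕ} {z : Fin d → ℝ} (h : SphereExtends (carrierDim z) X)
    {f : (Fin d → ℝ) → X} (hf : ContinuousOn f (carrierBoundary z)) :
    ∃ g, ContinuousOn g (carrier z) ∧ EqOn g f (carrierBoundary z) := by
  classical
  let e : {i // ⌊z i⌋ ≠ ⌈z i⌉} ≃ Fin (carrierDim z) := Fintype.equivFin _
  let emb : (Fin (carrierDim z) → ℝ) → (Fin d → ℝ) := fun u i =>
    if h : ⌊z i⌋ ≠ ⌈z i⌉ then ⌊z i⌋ + (u (e ⟨i, h⟩) + 1) / 2 else ⌊z i⌋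
  let coord : (Fin d → ℝ) → (Fin (carrierDim z) → ℝ) := fun w j =>
    2 * (w (e.symm j) - ⌊z (e.symm j)⌋) - 1
  have hceil : ∀ i, ⌊z i⌋ ≠ ⌈z i⌉ → (⌈z i⌉ : ℝ) = ⌊z i⌋ + 1 := by
    intro i hi
    have h1 := Int.floor_le_ceil (z i)
    have h2 := Int.ceil_le_floor_add_one (z i)
    have : ⌈z i⌉ = ⌊z i⌋ + 1 := by omega
    rw [this]
    push_cast
    ring
  have hemb : Continuous emb := by
    refine continuous_pi fun i => ?_
    by_cases h : ⌊z i⌋ ≠ ⌈z i⌉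
    · simp only [emb, dif_pos h]
      fun_prop
    · simp only [emb, dif_neg h]
      fun_prop
  have hcoord : Continuous coord := by
    simp only [coord]
    fun_prop
  have hec : ∀ w ∈ carrier z, emb (coord w) = w := by
    intro w hw
    ext i
    by_cases h : ⌊z i⌋ ≠ ⌈z i⌉
    · simp only [emb, coord, dif_pos h, Equiv.symm_apply_apply]
      ring
    · simp only [emb, dif_neg h]
      have h1 := hw.1 i
      have h2 := hw.2 i
      simp only [← not_not.1 h] at h1 h2
      exact le_antisymm h1 h2
  have hemb_mem : ∀ u ∈ sphere (0 : Fin (carrierDim z) → ℝ) 1, emb u ∈ carrierBoundary z := by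
    intro u hu
    rw [mem_sphere_zero_iff_norm, pi_norm_eq_iff one_pos] at hu
    obtain ⟨hu, j, hj⟩ := hu
    refine ⟨⟨fun i => ?_, fun i => ?_⟩, e.symm j, (e.symm j).2, ?_⟩
    · by_cases h : ⌊z i⌋ ≠ ⌈z i⌉
      · simp only [emb, dif_pos h]
        linarith [(abs_le.1 (hu (e ⟨i, h⟩))).1]
      · simp only [emb, dif_neg h, le_refl]
    · by_cases h : ⌊z i⌋ ≠ ⌈z i⌉
      · simp only [emb, dif_pos h, hceil i h]
        linarith [(abs_le.1 (hu (e ⟨i, h⟩))).2]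
      · simp only [emb, dif_neg h, ← not_not.1 h, le_refl]
    · rw [hceil _ (e.symm j).2]
      simp only [emb, dif_pos (e.symm j).2, Subtype.coe_eta, Equiv.apply_symm_apply]
      rcases (abs_eq zero_le_one).1 hj with hj | hj <;> rw [hj]
      · right; norm_num
      · left; norm_num
  have hcoord_le : ∀ w ∈ carrier z, ∀ j, |coord w j| ≤ 1 := by
    intro w hw j
    have h1 := hw.1 (e.symm j)
    have h2 := hw.2 (e.symm j)
    simp only [hceil _ (e.symm j).2] at h2
    simp only [coord, abs_le]
    constructor <;> linarith
  obtain ⟨g, hg, hgf⟩ := h (f ∘ emb) (hf.comp hemb.continuousOn hemb_mem)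
  refine ⟨g ∘ coord, hg.comp hcoord.continuousOn fun w hw => ?_, fun w hw => ?_⟩
  · rw [mem_closedBall_zero_iff]
    exact (pi_norm_le_iff_of_nonneg zero_le_one).2 (hcoord_le w hw)
  · refine (hgf ?_).trans (congrArg f (hec w hw.1))
    rw [mem_sphere_zero_iff_norm, pi_norm_eq_iff one_pos]
    obtain ⟨hw, i, hi, hwi⟩ := hw
    refine ⟨hcoord_le w hw, e ⟨i, hi⟩, ?_⟩
    simp only [coord, Equiv.symm_apply_apply]
    rcases hwi with h | h
    · rw [h]; norm_num
    · rw [h, hceil i hi]; norm_num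

lemma mem_carrierBoundary_of_ne {d : ℕ} {z w : Fin d → ℝ} (hw : w ∈ carrier z)
    (h : carrierEnds w ≠ carrierEnds z) : w ∈ carrierBoundary z ∧ carrierDim w < carrierDim z := by
  have hw' := mem_carrier_iff.1 hw
  have hi : ∃ i, ¬ (⌊w i⌋ = ⌊z i⌋ ∧ ⌈w i⌉ = ⌈z i⌉) := by
    by_contra! hc
    exact h (Prod.ext (funext fun i => (hc i).1) (funext fun i => (hc i).2))
  obtain ⟨i, hi⟩ := hi
  have h1 := Int.floor_le_ceil (w i)
  have h2 := Int.ceil_le_floor_add_one (z i)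
  have h3 := hw' i
  have hz : ⌊z i⌋ ≠ ⌈z i⌉ := by omega
  have hwi : ⌊w i⌋ = ⌈w i⌉ := by omega
  have hint : w i = ⌊w i⌋ := le_antisymm (by rw [hwi]; exact Int.le_ceil _) (Int.floor_le _)
  refine ⟨⟨hw, i, hz, ?_⟩, ?_⟩
  · rw [hint]
    norm_cast
    omega
  · refine Fintype.card_lt_of_injective_of_notMem
      (fun j : {j // ⌊w j⌋ ≠ ⌈w j⌉} => (⟨j.1, ?_⟩ : {j // ⌊z j⌋ ≠ ⌈z j⌉})) ?_ (b := ⟨i, hz⟩) ?_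
    · have := hw' j.1
      have := j.2
      have := Int.floor_le_ceil (w j.1)
      omega
    · intro j j' hj
      exact Subtype.ext (congrArg (fun a : {j // ⌊z j⌋ ≠ ⌈z j⌉} => a.1) hj)
    · rintro ⟨j, hj⟩
      have : j.1 = i := congrArg Subtype.val hj
      exact j.2 (this ▸ hwi)

/-- A map to `X` extends over cells of dimension `k` whenever maps from their boundaries do. -/
theorem exists_extension_of_isCubeComplex {d M : ℕ} {K : Set (Fin d → ℝ)}
    (hK : IsCubeComplex K) (hM : K ⊆ closedBall 0 M) {L : Set (Fin d → ℝ)}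
    (hL : IsCubeComplex L) (hLK : L ⊆ K)
    (hX : ∀ z ∈ K \ L, SphereExtends (carrierDim z) X)
    {f : (Fin d → ℝ) → X} (hf : ContinuousOn f L) :
    ∃ g, ContinuousOn g K ∧ EqOn g f L := by
  classical
  induction hn : (carrierEnds '' (K \ L)).ncard using Nat.strong_induction_on
    generalizing L f with
  | _ n ih =>
    rcases (K \ L).eq_empty_or_nonempty with h0 | h0
    · have : K = L := Subset.antisymm (sdiff_eq_empty.1 h0) hLK
      exact ⟨f, this ▸ hf, fun _ _ => rfl⟩
    obtain ⟨z, hz, hmin⟩ : ∃ z ∈ K \ L, ∀ w ∈ K \ L, carrierDim z ≤ carrierDim w := by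
      obtain ⟨_, ⟨z, hz, rfl⟩, h⟩ :=
        WellFounded.has_min (wellFounded_lt (α := ℕ)) (carrierDim '' (K \ L)) (h0.image _)
      exact ⟨z, hz, fun w hw => not_lt.1 (h _ ⟨w, hw, rfl⟩)⟩
    have hint : carrier z ∩ L ⊆ carrierBoundary z := by
      rintro w ⟨hw, hwL⟩
      by_contra hb
      have heq : carrierEnds w = carrierEnds z := by
        by_contra hne
        exact hb (mem_carrierBoundary_of_ne hw hne).1
      exact hz.2 (hL w hwL (mem_carrier_of_carrierEnds_eq heq.symm))
    have hbd : carrierBoundary z ⊆ L := by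
      rintro w ⟨hw, i, hi, hwi⟩
      have hne : carrierEnds w ≠ carrierEnds z := by
        intro heq
        have h1 : ⌊w i⌋ = ⌊z i⌋ := congrFun (congrArg Prod.fst heq) i
        have h2 : ⌈w i⌉ = ⌈z i⌉ := congrFun (congrArg Prod.snd heq) i
        rcases hwi with h | h <;> rw [h] at h1 h2 <;> simp at h1 h2 <;> omega
      have hlt := (mem_carrierBoundary_of_ne hw hne).2
      by_contra hwL
      exact absurd (hmin w ⟨hK z hz.1 hw, hwL⟩) (not_le.2 hlt)
    obtain ⟨g, hg, hgf⟩ := exists_extension_carrier (hX z hz) (hf.mono hbd)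
    let f' : (Fin d → ℝ) → X := fun w => if w ∈ carrier z then g w else f w
    have hf'g : EqOn f' g (carrier z) := fun w hw => if_pos hw
    have hf'f : EqOn f' f L := fun w hw => by
      by_cases hwz : w ∈ carrier z
      · exact (hf'g hwz).trans (hgf (hint ⟨hwz, hw⟩))
      · exact if_neg hwz
    have hf' : ContinuousOn f' (L ∪ carrier z) :=
      (hf.congr hf'f).union_of_isClosed (hg.congr hf'g) (hL.isClosed (hLK.trans hM))
        (isClosed_carrier z)
    have hsub : L ∪ carrier z ⊆ K := union_subset hLK (hK z hz.1)
    have hlt : (carrierEnds '' (K \ (L ∪ carrier z))).ncard < n := by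
      rw [← hn]
      refine Set.ncard_lt_ncard ⟨image_mono (sdiff_subset_sdiff_right subset_union_left), ?_⟩
        (finite_carrierEnds (sdiff_subset.trans hM))
      intro hle
      obtain ⟨w, hw, hwz⟩ := hle ⟨z, hz, rfl⟩
      exact hw.2 (Or.inr (mem_carrier_of_carrierEnds_eq hwz))
    obtain ⟨g', hg', hg'f⟩ := ih _ hlt (hL.union (isCubeComplex_carrier z)) hsub
      (fun w hw => hX w ⟨hw.1, fun h => hw.2 (Or.inl h)⟩) hf' rfl
    exact ⟨g', hg', fun w hw => (hg'f (Or.inl hw)).trans (hf'f hw)⟩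

/-- Extendability of a map from the boundary of a cube to the cube is invariant under homotopy. -/
lemma exists_extension_of_homotopy {d : ℕ} {R : ℝ} (hR : 0 < R) {φ ψ g : (Fin d → ℝ) → X}
    (H : (Fin d → ℝ) × ℝ → X) (hH : ContinuousOn H (sphere 0 R ×ˢ Icc 0 1))
    (H0 : ∀ z ∈ sphere 0 R, H (z, 0) = φ z) (H1 : ∀ z ∈ sphere 0 R, H (z, 1) = ψ z)
    (hg : ContinuousOn g (closedBall 0 R)) (hgψ : EqOn g ψ (sphere 0 R)) :
    ∃ g', ContinuousOn g' (closedBall 0 R) ∧ EqOn g' φ (sphere 0 R) := by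
  let A : Set (Fin d → ℝ) := {z | ‖z‖ ≤ R / 2}
  let B : Set (Fin d → ℝ) := {z | R / 2 ≤ ‖z‖ ∧ ‖z‖ ≤ R}
  have hA : IsClosed A := isClosed_le (by fun_prop) (by fun_prop)
  have hB1 : IsClosed {z : Fin d → ℝ | R / 2 ≤ ‖z‖} := isClosed_le (by fun_prop) (by fun_prop)
  have hB2 : IsClosed {z : Fin d → ℝ | ‖z‖ ≤ R} := isClosed_le (by fun_prop) (by fun_prop)
  have hB : IsClosed B := hB1.inter hB2
  have hsph : ∀ z : Fin d → ℝ, ‖z‖ ≠ 0 → (R / ‖z‖) • z ∈ sphere (0 : Fin d → ℝ) R := by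
    intro z hz
    rw [mem_sphere_zero_iff_norm, norm_smul, Real.norm_of_nonneg
      (div_nonneg hR.le (norm_nonneg z)), div_mul_cancel₀ _ hz]
  let g' : (Fin d → ℝ) → X := fun z =>
    if ‖z‖ ≤ R / 2 then g ((2 : ℝ) • z) else H ((R / ‖z‖) • z, 2 - 2 * ‖z‖ / R)
  have hg'A : EqOn g' (fun z => g ((2 : ℝ) • z)) A := fun z hz => if_pos hz
  have hg'B : EqOn g' (fun z => H ((R / ‖z‖) • z, 2 - 2 * ‖z‖ / R)) B := by
    intro z hz
    by_cases h : ‖z‖ ≤ R / 2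
    · have hn : ‖z‖ = R / 2 := le_antisymm h hz.1
      simp only [g', if_pos h]
      have h1 : (2 : ℝ) • z = (R / ‖z‖) • z := by
        congr 1
        rw [hn]
        field_simp
      have h2 : 2 - 2 * ‖z‖ / R = 1 := by
        rw [hn]
        field_simp
        norm_num
      have hs := hsph z (by rw [hn]; positivity)
      rw [h1, h2, H1 _ hs, hgψ hs]
    · exact if_neg h
  refine ⟨g', ContinuousOn.mono (s := A ∪ B) ((ContinuousOn.congr ?_ hg'A).union_of_isClosed
    (ContinuousOn.congr ?_ hg'B) hA hB) ?_, ?_⟩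
  · refine hg.comp (by fun_prop) fun z hz => ?_
    rw [mem_closedBall_zero_iff, norm_smul, Real.norm_of_nonneg zero_le_two]
    have : ‖z‖ ≤ R / 2 := hz
    linarith
  · have hne : ∀ z ∈ B, ‖z‖ ≠ 0 := fun z hz => by
      have := hz.1
      have : 0 < R / 2 := by positivity
      linarith
    refine hH.comp (((continuousOn_const.div continuousOn_id.norm hne).smul
      continuousOn_id).prodMk (by fun_prop)) fun z hz => ⟨hsph z (hne z hz), ?_⟩
    have h1 : R ≤ 2 * ‖z‖ := by linarith [hz.1]
    have h2 : 2 * ‖z‖ ≤ 2 * R := by linarith [hz.2]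
    constructor
    · rw [sub_nonneg, div_le_iff₀ hR]
      exact h2
    · have : 1 ≤ 2 * ‖z‖ / R := by
        rw [le_div_iff₀ hR, one_mul]
        exact h1
      linarith
  · intro z hz
    rw [mem_closedBall_zero_iff] at hz
    rcases le_total ‖z‖ (R / 2) with h | h
    · exact Or.inl h
    · exact Or.inr ⟨h, hz⟩
  · intro z hz
    have hz' := mem_sphere_zero_iff_norm.1 hz
    rw [hg'B ⟨by rw [hz']; linarith, hz'.le⟩]
    simp only [hz']
    rw [div_self hR.ne', one_smul, mul_div_assoc, div_self hR.ne']
    norm_num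
    exact H0 z hz

end SphereExtension

section EvenOdd

open Set Metric

/-- A perturbation of the identity which is constant near every even integer. -/
noncomputable def pushEven (r : ℝ) : ℝ :=
  r + ((fun θ : ℝ => min 2 (max 0 (6 * θ - 2)) - 2 * θ) ∘ Int.fract) (r / 2)

/-- A perturbation of the identity which is constant near every odd integer. -/
noncomputable def pushOdd (r : ℝ) : ℝ :=
  r + ((fun θ : ℝ => min (6 * θ) (max 1 (6 * θ - 4)) - 2 * θ) ∘ Int.fract) (r / 2)

/-- The distance to the nearest even integer. -/
noncomputable def evenDist (r : ℝ) : ℝ :=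
  ((fun θ : ℝ => min (2 * θ) (2 - 2 * θ)) ∘ Int.fract) (r / 2)

lemma continuous_pushEven : Continuous pushEven := by
  have h : Continuous ((fun θ : ℝ => min 2 (max 0 (6 * θ - 2)) - 2 * θ) ∘ Int.fract) :=
    ContinuousOn.comp_fract'' (by fun_prop) (by norm_num)
  exact continuous_id.add (h.comp (continuous_id.div_const 2))

lemma continuous_pushOdd : Continuous pushOdd := by
  have h : Continuous ((fun θ : ℝ => min (6 * θ) (max 1 (6 * θ - 4)) - 2 * θ) ∘ Int.fract) :=
    ContinuousOn.comp_fract'' (by fun_prop) (by norm_num)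
  exact continuous_id.add (h.comp (continuous_id.div_const 2))

lemma continuous_evenDist : Continuous evenDist := by
  have h : Continuous ((fun θ : ℝ => min (2 * θ) (2 - 2 * θ)) ∘ Int.fract) :=
    ContinuousOn.comp_fract'' (by fun_prop) (by norm_num)
  exact h.comp (continuous_id.div_const 2)

lemma exists_eq_two_mul_add (r : ℝ) : ∃ (n : ℤ) (s : ℝ), 0 ≤ s ∧ s < 2 ∧ r = 2 * n + s ∧
    pushEven r = 2 * n + min 2 (max 0 (3 * s - 2)) ∧
    pushOdd r = 2 * n + min (3 * s) (max 1 (3 * s - 4)) ∧ evenDist r = min s (2 - s) := by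
  have h := Int.floor_add_fract (r / 2)
  refine ⟨⌊r / 2⌋, 2 * Int.fract (r / 2), by linarith [Int.fract_nonneg (r / 2)],
    by linarith [Int.fract_lt_one (r / 2)], by linarith, ?_, ?_, rfl⟩
  · simp only [pushEven, Function.comp]
    rw [show 3 * (2 * Int.fract (r / 2)) = 6 * Int.fract (r / 2) by ring]
    linarith
  · simp only [pushOdd, Function.comp]
    rw [show 3 * (2 * Int.fract (r / 2)) = 6 * Int.fract (r / 2) by ring]
    linarith

lemma mem_Icc_floor_ceil_of_eq {r q s h : ℝ} {n : ℤ} (hs : 0 ≤ s) (hs2 : s < 2)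
    (hr : r = 2 * n + s) (hq : q = 2 * n + h) (h0 : 0 ≤ h) (h2 : h ≤ 2) (hs1 : 1 ≤ s → 1 ≤ h)
    (hs1' : s ≤ 1 → h ≤ 1) (hs0 : s = 0 → h = 0) : q ∈ Icc (⌊r⌋ : ℝ) ⌈r⌉ := by
  constructor
  · have h1 := Int.floor_le r
    rcases le_or_gt ⌊r⌋ (2 * n) with hk | hk
    · have : (⌊r⌋ : ℝ) ≤ 2 * n := by exact_mod_cast hk
      linarith
    · have h3 : (2 * n + 1 : ℝ) ≤ ⌊r⌋ := by exact_mod_cast hk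
      have h4 : ⌊r⌋ < 2 * n + 1 + 1 := by
        have : (⌊r⌋ : ℝ) < 2 * n + 1 + 1 := by linarith
        exact_mod_cast this
      have h5 : (⌊r⌋ : ℝ) ≤ 2 * n + 1 := by exact_mod_cast Int.lt_add_one_iff.1 h4
      linarith [hs1 (by linarith)]
  · have h1 := Int.le_ceil r
    rcases lt_trichotomy ⌈r⌉ (2 * n + 1) with hk | hk | hk
    · have h3 : (⌈r⌉ : ℝ) ≤ 2 * n := by exact_mod_cast Int.lt_add_one_iff.1 hk
      have h4 : s = 0 := by linarith
      have h5 : (2 * n : ℝ) ≤ ⌈r⌉ := by linarith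
      linarith [hs0 h4]
    · have h3 : (⌈r⌉ : ℝ) = 2 * n + 1 := by exact_mod_cast hk
      linarith [hs1' (by linarith)]
    · have h3 : (2 * n + 1 + 1 : ℝ) ≤ ⌈r⌉ := by exact_mod_cast hk
      linarith

lemma pushEven_mem (r : ℝ) : pushEven r ∈ Icc (⌊r⌋ : ℝ) ⌈r⌉ := by
  obtain ⟨n, s, hs, hs2, hr, he, -, -⟩ := exists_eq_two_mul_add r
  refine mem_Icc_floor_ceil_of_eq hs hs2 hr he ?_ ?_ ?_ ?_ ?_
  · exact le_min zero_le_two (le_max_left _ _)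
  · exact min_le_left _ _
  · exact fun h => le_min one_le_two (le_max_of_le_right (by linarith))
  · exact fun h => min_le_of_right_le (max_le zero_le_one (by linarith))
  · rintro rfl
    norm_num

lemma pushOdd_mem (r : ℝ) : pushOdd r ∈ Icc (⌊r⌋ : ℝ) ⌈r⌉ := by
  obtain ⟨n, s, hs, hs2, hr, -, ho, -⟩ := exists_eq_two_mul_add r
  refine mem_Icc_floor_ceil_of_eq hs hs2 hr ho ?_ ?_ ?_ ?_ ?_
  · exact le_min (by linarith) (le_max_of_le_left zero_le_one)
  · exact min_le_of_right_le (max_le one_le_two (by linarith))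
  · exact fun h => le_min (by linarith) (le_max_left _ _)
  · exact fun h => min_le_of_right_le (max_le le_rfl (by linarith))
  · rintro rfl
    norm_num

lemma pushEven_of_evenDist_lt {r : ℝ} (h : evenDist r < 2 / 3) : ∃ k : ℤ, pushEven r = 2 * k := by
  obtain ⟨n, s, hs, hs2, hr, he, -, hd⟩ := exists_eq_two_mul_add r
  rw [hd, min_lt_iff] at h
  rcases h with h | h
  · refine ⟨n, ?_⟩
    rw [he, max_eq_left (by linarith), min_eq_right zero_le_two, add_zero]
  · refine ⟨n + 1, ?_⟩
    rw [he, max_eq_right (by linarith), min_eq_left (by linarith)]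
    push_cast
    ring

lemma pushOdd_of_lt_evenDist {r : ℝ} (h : 1 / 3 < evenDist r) :
    ∃ k : ℤ, pushOdd r = 2 * k + 1 := by
  obtain ⟨n, s, hs, hs2, hr, -, ho, hd⟩ := exists_eq_two_mul_add r
  rw [hd, lt_min_iff] at h
  refine ⟨n, ?_⟩
  rw [ho, max_eq_left (by linarith), min_eq_right (by linarith)]

open Classical in
/-- The points of `ℝ^d` at most `p` of whose coordinates are not even integers. -/
def evenSkeleton (d p : ℕ) : Set (Fin d → ℝ) :=
  {z | (Finset.univ.filter fun i => ¬ ∃ k : ℤ, z i = 2 * k).card ≤ p}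

open Classical in
/-- The points of `ℝ^d` more than `p` of whose coordinates are odd integers. -/
def oddSkeleton (d p : ℕ) : Set (Fin d → ℝ) :=
  {z | p < (Finset.univ.filter fun i => ∃ k : ℤ, z i = 2 * k + 1).card}

lemma eq_of_mem_carrier_of_eq_intCast {d : ℕ} {z w : Fin d → ℝ} (h : w ∈ carrier z) {i : Fin d}
    {k : ℤ} (hk : z i = k) : w i = k := by
  have h1 := h.1 i
  have h2 := h.2 i
  simp only [hk, Int.floor_intCast, Int.ceil_intCast] at h1 h2
  exact le_antisymm h2 h1

lemma isCubeComplex_evenSkeleton (d p : ℕ) : IsCubeComplex (evenSkeleton d p) := by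
  classical
  intro z hz w hw
  refine le_trans (Finset.card_le_card ?_) hz
  refine Finset.monotone_filter_right _ fun i _ hi hzi => hi ?_
  obtain ⟨k, hk⟩ := hzi
  have := eq_of_mem_carrier_of_eq_intCast hw (i := i) (k := 2 * k) (by rw [hk]; push_cast; ring)
  exact ⟨k, by rw [this]; push_cast; ring⟩

lemma isCubeComplex_oddSkeleton (d p : ℕ) : IsCubeComplex (oddSkeleton d p) := by
  classical
  intro z hz w hw
  refine lt_of_lt_of_le hz (Finset.card_le_card ?_)
  refine Finset.monotone_filter_right _ fun i _ hzi => ?_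
  obtain ⟨k, hk⟩ := hzi
  have := eq_of_mem_carrier_of_eq_intCast hw (i := i) (k := 2 * k + 1)
    (by rw [hk]; push_cast; ring)
  exact ⟨k, by rw [this]; push_cast; ring⟩

lemma carrierDim_eq_card_filter {d : ℕ} (z : Fin d → ℝ) :
    carrierDim z = (Finset.univ.filter fun i => ⌊z i⌋ ≠ ⌈z i⌉).card :=
  Fintype.card_subtype _

lemma carrierDim_le_of_mem_evenSkeleton {d p : ℕ} {z : Fin d → ℝ} (hz : z ∈ evenSkeleton d p) :
    carrierDim z ≤ p := by
  classical
  rw [carrierDim_eq_card_filter]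
  refine le_trans (Finset.card_le_card ?_) hz
  refine Finset.monotone_filter_right _ fun i _ hi => ?_
  rintro ⟨k, hk⟩
  apply hi
  rw [hk, show (2 * k : ℝ) = ((2 * k : ℤ) : ℝ) by push_cast; ring, Int.floor_intCast,
    Int.ceil_intCast]

lemma carrierDim_add_lt_of_mem_oddSkeleton {d p : ℕ} {z : Fin d → ℝ}
    (hz : z ∈ oddSkeleton d p) : carrierDim z + p < d := by
  classical
  have h1 : carrierDim z ≤ (Finset.univ.filter fun i => ¬ ∃ k : ℤ, z i = 2 * k + 1).card := by
    rw [carrierDim_eq_card_filter]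
    refine Finset.card_le_card (Finset.monotone_filter_right _ fun i _ hi => ?_)
    rintro ⟨k, hk⟩
    apply hi
    rw [hk, show (2 * k + 1 : ℝ) = ((2 * k + 1 : ℤ) : ℝ) by push_cast; ring, Int.floor_intCast,
      Int.ceil_intCast]
  have h2 := Finset.card_filter_add_card_filter_not (s := (Finset.univ : Finset (Fin d)))
    (fun i => ∃ k : ℤ, z i = 2 * k + 1)
  rw [Finset.card_univ, Fintype.card_fin] at h2
  have h3 : p < (Finset.univ.filter fun i => ∃ k : ℤ, z i = 2 * k + 1).card := hz
  omega

lemma setOf_lt_card_filter_eq {d p : ℕ} {α : Type*} (P : Fin d → α → Prop)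
    [∀ z, DecidablePred fun i => P i z] :
    {z | p < (Finset.univ.filter fun i => P i z).card} =
      ⋃ s ∈ {s : Finset (Fin d) | p < s.card}, ⋂ i ∈ s, {z | P i z} := by
  ext z
  simp only [mem_iUnion, mem_iInter, exists_prop, mem_ofPred_eq]
  constructor
  · intro h
    exact ⟨_, h, fun i hi => (Finset.mem_filter.1 hi).2⟩
  · rintro ⟨s, hs, h⟩
    exact hs.trans_le (Finset.card_le_card fun i hi =>
      Finset.mem_filter.2 ⟨Finset.mem_univ i, h i hi⟩)

/-- A function separating the even skeleton from the complementary odd skeleton, and perturbations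
of the identity into these skeletons. -/
lemma exists_separating_function (d p : ℕ) : ∃ (τ : (Fin d → ℝ) → ℝ)
    (e o : (Fin d → ℝ) → Fin d → ℝ),
    Continuous τ ∧ Continuous e ∧ Continuous o ∧ (∀ z, e z ∈ carrier z) ∧ (∀ z, o z ∈ carrier z) ∧
    (∀ z, τ z ≤ 2 / 3 → e z ∈ evenSkeleton d p) ∧ (∀ z, 1 / 3 ≤ τ z → o z ∈ oddSkeleton d p) := by
  classical
  have hcont : ∀ i, Continuous fun z : Fin d → ℝ => evenDist (z i) := fun i =>
    continuous_evenDist.comp (continuous_apply i)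
  have hclosed : IsClosed {z : Fin d → ℝ |
      p < (Finset.univ.filter fun i => 2 / 3 ≤ evenDist (z i)).card} := by
    rw [setOf_lt_card_filter_eq fun i (z : Fin d → ℝ) => 2 / 3 ≤ evenDist (z i)]
    exact (Set.toFinite _).isClosed_biUnion fun s _ =>
      isClosed_biInter fun i _ => isClosed_le continuous_const (hcont i)
  have hopen : IsOpen {z : Fin d → ℝ |
      p < (Finset.univ.filter fun i => 1 / 3 < evenDist (z i)).card} := by
    rw [setOf_lt_card_filter_eq fun i (z : Fin d → ℝ) => 1 / 3 < evenDist (z i)]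
    exact isOpen_biUnion fun s _ =>
      isOpen_biInter_finset fun i _ => isOpen_lt continuous_const (hcont i)
  obtain ⟨τ, h0, h1, -⟩ := exists_continuous_zero_one_of_isClosed hopen.isClosed_compl hclosed <| by
    rw [disjoint_compl_left_iff_subset]
    intro z hz
    refine lt_of_lt_of_le hz (Finset.card_le_card ?_)
    exact Finset.monotone_filter_right _ fun i _ hi => lt_of_lt_of_le (by norm_num) hi
  refine ⟨τ, fun z i => pushEven (z i), fun z i => pushOdd (z i), τ.continuous,
    continuous_pi fun i => continuous_pushEven.comp (continuous_apply i),
    continuous_pi fun i => continuous_pushOdd.comp (continuous_apply i),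
    fun z => ⟨fun i => (pushEven_mem (z i)).1, fun i => (pushEven_mem (z i)).2⟩,
    fun z => ⟨fun i => (pushOdd_mem (z i)).1, fun i => (pushOdd_mem (z i)).2⟩,
    fun z hz => ?_, fun z hz => ?_⟩
  · have hz' : ¬ p < (Finset.univ.filter fun i => 2 / 3 ≤ evenDist (z i)).card := by
      intro h
      have : τ z = 1 := h1 h
      linarith
    refine le_trans (Finset.card_le_card ?_) (not_lt.1 hz')
    refine Finset.monotone_filter_right _ fun i _ hi => ?_
    by_contra h
    exact hi (pushEven_of_evenDist_lt (not_le.1 h))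
  · have hz' : p < (Finset.univ.filter fun i => 1 / 3 < evenDist (z i)).card := by
      by_contra h
      have : τ z = 0 := h0 h
      linarith
    refine lt_of_lt_of_le hz' (Finset.card_le_card ?_)
    exact Finset.monotone_filter_right _ fun i _ hi => pushOdd_of_lt_evenDist hi

end EvenOdd

section JoinMaps

open Set Metric Topology unitInterval

variable {X Y : Type*} [TopologicalSpace X] [TopologicalSpace Y]

/-- The quotient map onto the join. -/
def joinMk (p : X × I × Y) : Join X Y := Quot.mk _ p

lemma isQuotientMap_joinMk : IsQuotientMap (joinMk : _ → Join X Y) :=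
  isQuotientMap_quot_mk

/-- The point of the join with coordinates `x`, `y` and parameter `t` (clamped to `[0, 1]`). -/
noncomputable def joinPoint (x : X) (t : ℝ) (y : Y) : Join X Y :=
  joinMk (x, projIcc 0 1 zero_le_one t, y)

lemma continuous_joinPoint : Continuous fun p : X × ℝ × Y => joinPoint p.1 p.2.1 p.2.2 :=
  isQuotientMap_joinMk.continuous.comp (continuous_fst.prodMk
    ((continuous_projIcc.comp continuous_snd.fst).prodMk continuous_snd.snd))

lemma joinPoint_coe (x : X) (t : I) (y : Y) : joinPoint x t y = joinMk (x, t, y) := by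
  rw [joinPoint, projIcc_val]

lemma joinPoint_of_le_zero {t : ℝ} (ht : t ≤ 0) (x : X) (y y' : Y) :
    joinPoint x t y = joinPoint x 0 y' :=
  Quot.sound (Or.inl ⟨projIcc_of_le_left zero_le_one ht,
    projIcc_of_le_left zero_le_one le_rfl, rfl⟩)

lemma joinPoint_of_one_le {t : ℝ} (ht : 1 ≤ t) (x x' : X) (y : Y) :
    joinPoint x t y = joinPoint x' 1 y :=
  Quot.sound (Or.inr ⟨projIcc_of_right_le zero_le_one ht,
    projIcc_of_right_le zero_le_one le_rfl, rfl⟩)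

lemma joinPoint_congr {t : ℝ} {x x' : X} {y y' : Y} (hx : t < 1 → x = x') (hy : 0 < t → y = y') :
    joinPoint x t y = joinPoint x' t y' := by
  rcases le_or_gt t 0 with h | h
  · rw [hx (by linarith), joinPoint_of_le_zero h x' y y', joinPoint_of_le_zero h x' y' y']
  · rw [hy h]
    rcases lt_or_ge t 1 with h1 | h1
    · rw [hx h1]
    · rw [joinPoint_of_one_le h1 x x, joinPoint_of_one_le h1 x' x]

lemma continuous_joinPoint_of_continuousOn {W : Type*} [TopologicalSpace W] {t : W → ℝ} {x : W → X}
    {y : W → Y} (ht : Continuous t) (hx : ContinuousOn x {w | t w ≤ 2 / 3})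
    (hy : ContinuousOn y {w | 1 / 3 ≤ t w}) :
    Continuous fun w => joinPoint (x w) (3 * t w - 1) (y w) := by
  rcases isEmpty_or_nonempty W with hW | ⟨⟨w₀⟩⟩
  · exact continuous_of_const fun w => hW.elim w
  let A : Set W := {w | t w ≤ 1 / 3}
  let B : Set W := {w | 1 / 3 ≤ t w} ∩ {w | t w ≤ 2 / 3}
  let C : Set W := {w | 2 / 3 ≤ t w}
  have hA : IsClosed A := isClosed_le ht continuous_const
  have hB : IsClosed B :=
    (isClosed_le continuous_const ht).inter (isClosed_le ht continuous_const)
  have hC : IsClosed C := isClosed_le continuous_const ht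
  have hcA : ContinuousOn (fun w => joinPoint (x w) (3 * t w - 1) (y w)) A := by
    have h1 : A ⊆ {w | t w ≤ 2 / 3} := fun w (hw : t w ≤ 1 / 3) => show t w ≤ 2 / 3 by linarith
    refine ContinuousOn.congr (f := fun w => joinPoint (x w) 0 (y w₀))
      (continuous_joinPoint.comp_continuousOn
        ((hx.mono h1).prodMk (continuousOn_const.prodMk continuousOn_const))) fun w hw => ?_
    have : t w ≤ 1 / 3 := hw
    exact joinPoint_of_le_zero (by linarith) _ _ _
  have hcB : ContinuousOn (fun w => joinPoint (x w) (3 * t w - 1) (y w)) B :=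
    continuous_joinPoint.comp_continuousOn ((hx.mono inter_subset_right).prodMk
      (((continuous_const.mul ht).sub continuous_const).continuousOn.prodMk
        (hy.mono inter_subset_left)))
  have hcC : ContinuousOn (fun w => joinPoint (x w) (3 * t w - 1) (y w)) C := by
    have h1 : C ⊆ {w | 1 / 3 ≤ t w} := fun w (hw : 2 / 3 ≤ t w) => show 1 / 3 ≤ t w by linarith
    refine ContinuousOn.congr (f := fun w => joinPoint (x w₀) 1 (y w))
      (continuous_joinPoint.comp_continuousOn
        (continuousOn_const.prodMk (continuousOn_const.prodMk (hy.mono h1)))) fun w hw => ?_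
    have : 2 / 3 ≤ t w := hw
    exact joinPoint_of_one_le (by linarith) _ _ _
  rw [← continuousOn_univ]
  refine ContinuousOn.mono ((hcA.union_of_isClosed hcB hA hB).union_of_isClosed hcC
    (hA.union hB) hC) fun w _ => ?_
  rcases le_total (t w) (1 / 3) with h | h
  · exact Or.inl (Or.inl h)
  · rcases le_total (t w) (2 / 3) with h' | h'
    · exact Or.inl (Or.inr ⟨h, h'⟩)
    · exact Or.inr h'

lemma continuousOn_joinPoint {W : Type*} [TopologicalSpace W] {D : Set W} {t : W → ℝ} {x : W → X}
    {y : W → Y} (ht : ContinuousOn t D) (hx : ContinuousOn x (D ∩ {w | t w ≤ 2 / 3}))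
    (hy : ContinuousOn y (D ∩ {w | 1 / 3 ≤ t w})) :
    ContinuousOn (fun w => joinPoint (x w) (3 * t w - 1) (y w)) D := by
  rw [continuousOn_iff_continuous_domRestrict] at ht ⊢
  exact continuous_joinPoint_of_continuousOn ht
    (hx.comp continuous_subtype_val.continuousOn fun w hw => ⟨w.2, hw⟩)
    (hy.comp continuous_subtype_val.continuousOn fun w hw => ⟨w.2, hw⟩)

/-- The parameter in `[0, 1]` of a point of the join. -/
def joinT : Join X Y → ℝ :=
  Quot.lift (fun p => (p.2.1 : ℝ)) <| by
    rintro p q (⟨hp, hq, -⟩ | ⟨hp, hq, -⟩) <;> rw [hp, hq]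

lemma continuous_joinT : Continuous (joinT : Join X Y → ℝ) :=
  isQuotientMap_joinMk.continuous_iff.2 (continuous_subtype_val.comp continuous_snd.fst)

open Classical in
/-- The `X`-coordinate of a point of the join, with a default value at the far end. -/
noncomputable def joinX (x₀ : X) : Join X Y → X :=
  Quot.lift (fun p => if p.2.1 = 1 then x₀ else p.1) <| by
    rintro p q (⟨hp, hq, h⟩ | ⟨hp, hq, -⟩) <;> simp only [hp, hq, if_true]
    rw [h]

open Classical in
/-- The `Y`-coordinate of a point of the join, with a default value at the far end. -/
noncomputable def joinY (y₀ : Y) : Join X Y → Y :=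
  Quot.lift (fun p => if p.2.1 = 0 then y₀ else p.2.2) <| by
    rintro p q (⟨hp, hq, -⟩ | ⟨hp, hq, h⟩) <;> simp only [hp, hq, if_true]
    rw [h]

lemma continuousOn_joinX (x₀ : X) :
    ContinuousOn (joinX x₀ : Join X Y → X) {j | joinT j < 1} := by
  rw [isQuotientMap_joinMk.continuousOn_isOpen_iff (isOpen_lt continuous_joinT continuous_const)]
  refine continuous_fst.continuousOn.congr fun p hp => if_neg fun h => ?_
  have hp' : (p.2.1 : ℝ) < 1 := hp
  rw [h] at hp'
  exact lt_irrefl _ hp'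

lemma continuousOn_joinY (y₀ : Y) :
    ContinuousOn (joinY y₀ : Join X Y → Y) {j | 0 < joinT j} := by
  rw [isQuotientMap_joinMk.continuousOn_isOpen_iff (isOpen_lt continuous_const continuous_joinT)]
  refine continuous_snd.snd.continuousOn.congr fun p hp => if_neg fun h => ?_
  have hp' : 0 < (p.2.1 : ℝ) := hp
  rw [h] at hp'
  exact lt_irrefl _ hp'

lemma joinPoint_joinX_joinY_mk (x₀ : X) (y₀ : Y) (x : X) (t : I) (y : Y) {s : ℝ}
    (h0 : t = 0 → s ≤ 0) (h1 : t = 1 → 1 ≤ s) :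
    joinPoint (joinX x₀ (joinMk (x, t, y))) s
      (joinY y₀ (joinMk (x, t, y))) = joinPoint x s y := by
  refine joinPoint_congr (fun h => if_neg fun ht => ?_) fun h => if_neg fun ht => ?_
  · exact absurd (h1 ht) (not_le.2 h)
  · exact absurd (h0 ht) (not_le.2 h)

/-- The homotopy stretching the middle part of the join. -/
noncomputable def joinStretch (x₀ : X) (y₀ : Y) (p : Join X Y × ℝ) : Join X Y :=
  joinPoint (joinX x₀ p.1) (joinT p.1 + projIcc (0 : ℝ) 1 zero_le_one p.2 * (2 * joinT p.1 - 1))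
    (joinY y₀ p.1)

lemma continuous_joinStretch (x₀ : X) (y₀ : Y) : Continuous (joinStretch x₀ y₀) := by
  refine isQuotientMap_joinMk.continuous_lift_prod_left ?_
  have h : ∀ p : (X × I × Y) × ℝ, joinStretch x₀ y₀ (joinMk p.1, p.2) =
      joinPoint p.1.1 ((p.1.2.1 : ℝ) + projIcc (0 : ℝ) 1 zero_le_one p.2 * (2 * p.1.2.1 - 1))
        p.1.2.2 := by
    rintro ⟨⟨x, t, y⟩, s⟩
    have hs := (projIcc (0 : ℝ) 1 zero_le_one s).2.1
    refine joinPoint_joinX_joinY_mk x₀ y₀ x t y ?_ ?_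
    · rintro rfl
      change (0 : ℝ) + _ * (2 * 0 - 1) ≤ 0
      linarith
    · rintro rfl
      change 1 ≤ (1 : ℝ) + _ * (2 * 1 - 1)
      linarith
  simp only [h]
  have hp : Continuous fun p : (X × I × Y) × ℝ => (projIcc (0 : ℝ) 1 zero_le_one p.2 : ℝ) :=
    continuous_subtype_val.comp (continuous_projIcc.comp continuous_snd)
  exact continuous_joinPoint.comp (g := fun p : X × ℝ × Y => joinPoint p.1 p.2.1 p.2.2)
    (f := fun p : (X × I × Y) × ℝ => (p.1.1,
      ((p.1.2.1 : ℝ) + projIcc (0 : ℝ) 1 zero_le_one p.2 * (2 * p.1.2.1 - 1), p.1.2.2)))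
    (by fun_prop)

lemma joinStretch_zero (x₀ : X) (y₀ : Y) (j : Join X Y) : joinStretch x₀ y₀ (j, 0) = j := by
  obtain ⟨⟨x, t, y⟩, rfl⟩ := isQuotientMap_joinMk.surjective j
  rw [joinStretch, projIcc_left]
  change joinPoint _ ((t : ℝ) + 0 * (2 * (t : ℝ) - 1)) _ = _
  rw [zero_mul, add_zero, joinPoint_joinX_joinY_mk, joinPoint_coe]
  · rintro rfl
    exact le_rfl
  · rintro rfl
    exact le_rfl

lemma joinStretch_one (x₀ : X) (y₀ : Y) (j : Join X Y) :
    joinStretch x₀ y₀ (j, 1) = joinPoint (joinX x₀ j) (3 * joinT j - 1) (joinY y₀ j) := by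
  rw [joinStretch, projIcc_right]
  congr 1
  change joinT j + 1 * (2 * joinT j - 1) = _
  ring

lemma norm_sub_le_one_of_mem_carrier {d : ℕ} {z w : Fin d → ℝ} (h : w ∈ carrier z) :
    ‖z - w‖ ≤ 1 := by
  refine (pi_norm_le_iff_of_nonneg zero_le_one).2 fun i => ?_
  have h1 := h.1 i
  have h2 := h.2 i
  have h3 := Int.floor_le (z i)
  have h4 := Int.le_ceil (z i)
  have h5 : (⌈z i⌉ : ℝ) ≤ ⌊z i⌋ + 1 := by exact_mod_cast Int.ceil_le_floor_add_one (z i)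
  rw [Pi.sub_apply, Real.norm_eq_abs, abs_le]
  constructor <;> linarith

lemma isCubeComplex_closedBall (d M : ℕ) :
    IsCubeComplex (closedBall (0 : Fin d → ℝ) M) := by
  intro z hz w hw
  rw [mem_closedBall_zero_iff, pi_norm_le_iff_of_nonneg M.cast_nonneg] at hz ⊢
  intro i
  have hi := abs_le.1 (hz i)
  have h1 : (-M : ℝ) ≤ ⌊z i⌋ := by
    have : (-M : ℤ) ≤ ⌊z i⌋ := Int.le_floor.2 (by push_cast; exact hi.1)
    exact_mod_cast this
  have h2 : (⌈z i⌉ : ℝ) ≤ M := by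
    have : ⌈z i⌉ ≤ (M : ℤ) := Int.ceil_le.2 (by push_cast; exact hi.2)
    exact_mod_cast this
  exact abs_le.2 ⟨h1.trans (hw.1 i), (hw.2 i).trans h2⟩

lemma isCubeComplex_sphere (d : ℕ) {M : ℕ} (hM : 0 < M) :
    IsCubeComplex (sphere (0 : Fin d → ℝ) M) := by
  intro z hz w hw
  have hM' : (0 : ℝ) < M := Nat.cast_pos.2 hM
  have hwM := isCubeComplex_closedBall d M z (sphere_subset_closedBall hz) hw
  rw [mem_closedBall_zero_iff, pi_norm_le_iff_of_nonneg M.cast_nonneg] at hwM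
  rw [mem_sphere_zero_iff_norm, pi_norm_eq_iff hM'] at hz ⊢
  obtain ⟨-, i, hi⟩ := hz
  refine ⟨hwM, i, ?_⟩
  rcases (abs_eq hM'.le).1 hi with h | h
  · rw [eq_of_mem_carrier_of_eq_intCast hw (k := M) (by rw [h, Int.cast_natCast]),
      Int.cast_natCast, abs_of_pos hM']
  · rw [eq_of_mem_carrier_of_eq_intCast hw (k := -M) (by rw [h, Int.cast_neg, Int.cast_natCast]),
      Int.cast_neg, Int.cast_natCast, abs_neg, abs_of_pos hM']

/-- Maps given by coordinates from the boundary of a large cube to a join extend to the cube, if the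
coordinates are defined on suitable subcomplexes. -/
lemma exists_extension_joinPoint {d m n M : ℕ} (hM : 0 < M) (hd : d ≤ m + n + 3)
    (hX : ∀ j ≤ m + 1, SphereExtends j X) (hY : ∀ j ≤ n + 1, SphereExtends j Y)
    {P Q : Set (Fin d → ℝ)} (hP : IsCubeComplex P) (hQ : IsCubeComplex Q)
    (hPM : P ⊆ sphere 0 M) (hQM : Q ⊆ sphere 0 M)
    {t : (Fin d → ℝ) → ℝ} {x : (Fin d → ℝ) → X} {y : (Fin d → ℝ) → Y}
    (ht : ContinuousOn t (sphere 0 M)) (hx : ContinuousOn x P) (hy : ContinuousOn y Q)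
    (mem_P : ∀ z ∈ sphere (0 : Fin d → ℝ) M, t z ≤ 2 / 3 → z ∈ P)
    (mem_Q : ∀ z ∈ sphere (0 : Fin d → ℝ) M, 1 / 3 ≤ t z → z ∈ Q) :
    ∃ g, ContinuousOn g (closedBall 0 M) ∧
      EqOn g (fun z => joinPoint (x z) (3 * t z - 1) (y z)) (sphere 0 M) := by
  have hM' : (0 : ℝ) < M := Nat.cast_pos.2 hM
  have hBC := isCubeComplex_closedBall d M
  let E : Set (Fin d → ℝ) := closedBall 0 M ∩ evenSkeleton d (m + 1)
  let O : Set (Fin d → ℝ) := closedBall 0 M ∩ oddSkeleton d (m + 1)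
  obtain ⟨x', hx', hxx⟩ := exists_extension_of_isCubeComplex (M := M) (f := x) (L := P) (K := P ∪ E)
    (hP.union (hBC.inter (isCubeComplex_evenSkeleton d (m + 1))))
    (union_subset (hPM.trans sphere_subset_closedBall) inter_subset_left) hP
    subset_union_left
    (fun z hz => hX _ (carrierDim_le_of_mem_evenSkeleton (hz.1.resolve_left hz.2).2)) hx
  obtain ⟨y', hy', hyy⟩ := exists_extension_of_isCubeComplex (M := M) (f := y) (L := Q) (K := Q ∪ O)
    (hQ.union (hBC.inter (isCubeComplex_oddSkeleton d (m + 1))))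
    (union_subset (hQM.trans sphere_subset_closedBall) inter_subset_left) hQ
    subset_union_left
    (fun z hz => hY _ (by
      have := carrierDim_add_lt_of_mem_oddSkeleton (hz.1.resolve_left hz.2).2
      omega)) hy
  obtain ⟨τ, e, o, hτ, he, ho, he_mem, ho_mem, hτe, hτo⟩ := exists_separating_function d (m + 1)
  have e_mem : ∀ z ∈ closedBall (0 : Fin d → ℝ) M, τ z ≤ 2 / 3 → e z ∈ P ∪ E := fun z hz h =>
    Or.inr ⟨hBC z hz (he_mem z), hτe z h⟩
  have o_mem : ∀ z ∈ closedBall (0 : Fin d → ℝ) M, 1 / 3 ≤ τ z → o z ∈ Q ∪ O := fun z hz h =>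
    Or.inr ⟨hBC z hz (ho_mem z), hτo z h⟩
  have hG : ContinuousOn (fun z => joinPoint (x' (e z)) (3 * τ z - 1) (y' (o z)))
      (closedBall 0 M) :=
    continuousOn_joinPoint hτ.continuousOn
      (hx'.comp he.continuousOn fun z hz => e_mem z hz.1 hz.2)
      (hy'.comp ho.continuousOn fun z hz => o_mem z hz.1 hz.2)
  obtain ⟨g₁, hg₁, hg₁'⟩ := exists_extension_of_homotopy hM'
    (φ := fun z => joinPoint (x' (e z)) (3 * t z - 1) (y' (o z)))
    (fun p => joinPoint (x' (e p.1)) (3 * ((1 - p.2) * t p.1 + p.2 * τ p.1) - 1) (y' (o p.1)))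
    (by
      have ht' : ContinuousOn (fun p : (Fin d → ℝ) × ℝ => t p.1) (sphere 0 M ×ˢ Icc 0 1) :=
        ht.comp continuousOn_fst fun p hp => hp.1
      have hc : ContinuousOn (fun p : (Fin d → ℝ) × ℝ => 1 - p.2) (sphere 0 M ×ˢ Icc 0 1) := by
        fun_prop
      have hcτ : Continuous fun p : (Fin d → ℝ) × ℝ => p.2 * τ p.1 := by fun_prop
      have hcx : Continuous fun p : (Fin d → ℝ) × ℝ => e p.1 := by fun_prop
      have hcy : Continuous fun p : (Fin d → ℝ) × ℝ => o p.1 := by fun_prop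
      refine continuousOn_joinPoint (W := (Fin d → ℝ) × ℝ) (D := sphere 0 M ×ˢ Icc 0 1)
        (t := fun p => (1 - p.2) * t p.1 + p.2 * τ p.1)
        (x := fun p => x' (e p.1)) (y := fun p => y' (o p.1))
        ((hc.mul ht').add hcτ.continuousOn) (hx'.comp hcx.continuousOn fun p hp => ?_)
        (hy'.comp hcy.continuousOn fun p hp => ?_)
      · rcases le_or_gt (τ p.1) (2 / 3) with h | h
        · exact e_mem p.1 (sphere_subset_closedBall hp.1.1) h
        · have hle : (1 - p.2) * t p.1 + p.2 * τ p.1 ≤ 2 / 3 := hp.2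
          have htp : t p.1 ≤ 2 / 3 := not_lt.1 fun h' => not_lt.2 hle <|
            convex_Ioi (2 / 3 : ℝ) h' h (sub_nonneg.2 hp.1.2.2) hp.1.2.1 (sub_add_cancel _ _)
          exact Or.inl (hP p.1 (mem_P p.1 hp.1.1 htp) (he_mem p.1))
      · rcases lt_or_ge (τ p.1) (1 / 3) with h | h
        · have hle : 1 / 3 ≤ (1 - p.2) * t p.1 + p.2 * τ p.1 := hp.2
          have htp : 1 / 3 ≤ t p.1 := not_lt.1 fun h' => not_lt.2 hle <|
            convex_Iio (1 / 3 : ℝ) h' h (sub_nonneg.2 hp.1.2.2) hp.1.2.1 (sub_add_cancel _ _)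
          exact Or.inl (hQ p.1 (mem_Q p.1 hp.1.1 htp) (ho_mem p.1))
        · exact o_mem p.1 (sphere_subset_closedBall hp.1.1) h)
    (fun z _ => by simp only [sub_zero, one_mul, zero_mul, add_zero])
    (fun z _ => by simp only [sub_self, one_mul, zero_mul, zero_add]) hG fun z _ => rfl
  exact exists_extension_of_homotopy hM'
    (fun p => joinPoint (x (p.1 + p.2 • (e p.1 - p.1))) (3 * t p.1 - 1)
      (y (p.1 + p.2 • (o p.1 - p.1))))
    (by
      have hcx : Continuous fun p : (Fin d → ℝ) × ℝ => p.1 + p.2 • (e p.1 - p.1) := by fun_prop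
      have hcy : Continuous fun p : (Fin d → ℝ) × ℝ => p.1 + p.2 • (o p.1 - p.1) := by fun_prop
      refine continuousOn_joinPoint (W := (Fin d → ℝ) × ℝ) (D := sphere 0 M ×ˢ Icc 0 1)
        (t := fun p => t p.1)
        (x := fun p => x (p.1 + p.2 • (e p.1 - p.1))) (y := fun p => y (p.1 + p.2 • (o p.1 - p.1)))
        (ht.comp continuousOn_fst fun p hp => hp.1)
        (hx.comp hcx.continuousOn fun p hp => ?_) (hy.comp hcy.continuousOn fun p hp => ?_)
      · exact hP p.1 (mem_P p.1 hp.1.1 hp.2) ((convex_Icc _ _).add_smul_sub_mem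
          (mem_carrier_self p.1) (he_mem p.1) hp.1.2)
      · exact hQ p.1 (mem_Q p.1 hp.1.1 hp.2) ((convex_Icc _ _).add_smul_sub_mem
          (mem_carrier_self p.1) (ho_mem p.1) hp.1.2))
    (fun z _ => by simp only [zero_smul, add_zero])
    (fun z hz => by
      simp only [one_smul, add_sub_cancel]
      refine joinPoint_congr (fun h => ?_) fun h => ?_
      · exact (hxx (hP _ (mem_P z hz (by linarith)) (he_mem z))).symm
      · exact (hyy (hQ _ (mem_Q z hz (by linarith)) (ho_mem z))).symm) hg₁ hg₁'

/-- Maps from the boundary of a large cube to a join which vary little on each integral cell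
extend to the cube. -/
lemma exists_extension_join {d m n M : ℕ} (hM : 0 < M) (hd : d ≤ m + n + 3)
    (hX : ∀ j ≤ m + 1, SphereExtends j X) (hY : ∀ j ≤ n + 1, SphereExtends j Y) (x₀ : X) (y₀ : Y)
    {φ : (Fin d → ℝ) → Join X Y} (hφ : ContinuousOn φ (sphere 0 M))
    (hfine : ∀ z ∈ sphere (0 : Fin d → ℝ) M, ∀ w ∈ carrier z,
      |joinT (φ z) - joinT (φ w)| < 1 / 3) :
    ∃ g, ContinuousOn g (closedBall 0 M) ∧ EqOn g φ (sphere 0 M) := by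
  have hM' : (0 : ℝ) < M := Nat.cast_pos.2 hM
  let t : (Fin d → ℝ) → ℝ := fun z => joinT (φ z)
  have ht : ContinuousOn t (sphere 0 M) := continuous_joinT.comp_continuousOn hφ
  let P : Set (Fin d → ℝ) := {z | z ∈ sphere 0 M ∧ ∀ w ∈ carrier z, t w < 1}
  let Q : Set (Fin d → ℝ) := {z | z ∈ sphere 0 M ∧ ∀ w ∈ carrier z, 0 < t w}
  have hSC := isCubeComplex_sphere d hM
  have hP : IsCubeComplex P := fun z hz w hw =>
    ⟨hSC z hz.1 hw, fun v hv => hz.2 v (carrier_subset_carrier hw hv)⟩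
  have hQ : IsCubeComplex Q := fun z hz w hw =>
    ⟨hSC z hz.1 hw, fun v hv => hz.2 v (carrier_subset_carrier hw hv)⟩
  have mem_P : ∀ z ∈ sphere (0 : Fin d → ℝ) M, t z ≤ 2 / 3 → z ∈ P := fun z hz h =>
    ⟨hz, fun w hw => by linarith [(abs_lt.1 (hfine z hz w hw)).1]⟩
  have mem_Q : ∀ z ∈ sphere (0 : Fin d → ℝ) M, 1 / 3 ≤ t z → z ∈ Q := fun z hz h =>
    ⟨hz, fun w hw => by linarith [(abs_lt.1 (hfine z hz w hw)).2]⟩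
  let x : (Fin d → ℝ) → X := fun z => joinX x₀ (φ z)
  let y : (Fin d → ℝ) → Y := fun z => joinY y₀ (φ z)
  have hx : ContinuousOn x P := (continuousOn_joinX x₀).comp (hφ.mono fun z hz => hz.1)
    fun z hz => hz.2 z (mem_carrier_self z)
  have hy : ContinuousOn y Q := (continuousOn_joinY y₀).comp (hφ.mono fun z hz => hz.1)
    fun z hz => hz.2 z (mem_carrier_self z)
  obtain ⟨g, hg, hg'⟩ := exists_extension_joinPoint hM hd hX hY hP hQ (fun z hz => hz.1)
    (fun z hz => hz.1) ht hx hy mem_P mem_Q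
  exact exists_extension_of_homotopy hM' (fun p => joinStretch x₀ y₀ (φ p.1, p.2))
    ((continuous_joinStretch x₀ y₀).comp_continuousOn
      ((hφ.comp continuousOn_fst fun p hp => hp.1).prodMk continuousOn_snd))
    (fun z _ => joinStretch_zero x₀ y₀ _) (fun z _ => joinStretch_one x₀ y₀ _) hg hg'

lemma SphereExtends.join {d m n : ℕ} (hd : d ≤ m + n + 3) (hX : ∀ j ≤ m + 1, SphereExtends j X)
    (hY : ∀ j ≤ n + 1, SphereExtends j Y) (x₀ : X) (y₀ : Y) : SphereExtends d (Join X Y) := by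
  intro f hf
  have huc := (isCompact_sphere (0 : Fin d → ℝ) 1).uniformContinuousOn_of_continuous
    (continuous_joinT.comp_continuousOn hf)
  obtain ⟨δ, hδ, h⟩ := Metric.uniformContinuousOn_iff.1 huc (1 / 3) (by norm_num)
  obtain ⟨k, hk⟩ := exists_nat_one_div_lt hδ
  have hM : (0 : ℝ) < (k + 1 : ℕ) := Nat.cast_pos.2 k.succ_pos
  have hscale : ∀ z ∈ sphere (0 : Fin d → ℝ) (k + 1 : ℕ),
      ((k + 1 : ℕ) : ℝ)⁻¹ • z ∈ sphere (0 : Fin d → ℝ) 1 := fun z hz => by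
    rw [mem_sphere_zero_iff_norm] at hz ⊢
    rw [norm_smul, norm_inv, Real.norm_of_nonneg hM.le, hz, inv_mul_cancel₀ hM.ne']
  obtain ⟨g, hg, hgf⟩ := exists_extension_join k.succ_pos hd hX hY x₀ y₀
    (φ := fun z => f (((k + 1 : ℕ) : ℝ)⁻¹ • z))
    (hf.comp (continuous_const_smul _).continuousOn hscale) fun z hz w hw => by
      refine h _ (hscale z hz) _ (hscale w (isCubeComplex_sphere d k.succ_pos z hz hw)) ?_
      rw [dist_eq_norm, ← smul_sub, norm_smul, norm_inv, Real.norm_of_nonneg hM.le]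
      refine lt_of_le_of_lt (mul_le_of_le_one_right (inv_nonneg.2 hM.le)
        (norm_sub_le_one_of_mem_carrier hw)) ?_
      rw [← one_div]
      exact_mod_cast hk
  refine ⟨fun z => g (((k + 1 : ℕ) : ℝ) • z),
    hg.comp (continuous_const_smul _).continuousOn fun z hz => ?_, fun z hz => ?_⟩
  · rw [mem_closedBall_zero_iff] at hz ⊢
    rw [norm_smul, Real.norm_of_nonneg hM.le]
    exact mul_le_of_le_one_right hM.le hz
  · have hz' : ((k + 1 : ℕ) : ℝ) • z ∈ sphere (0 : Fin d → ℝ) (k + 1 : ℕ) := by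
      rw [mem_sphere_zero_iff_norm] at hz ⊢
      rw [norm_smul, Real.norm_of_nonneg hM.le, hz, mul_one]
    refine (hgf hz').trans ?_
    simp only [smul_smul, inv_mul_cancel₀ hM.ne', one_smul]

end JoinMaps

/-- The join of an `m`-connected space and an `n`-connected space is `(m+n+2)`-connected. -/
theorem stmt8 (m n : ℕ) (X Y : Type*) [TopologicalSpace X] [TopologicalSpace Y]
    (hX : IsNConnected m X) (hY : IsNConnected n Y) :
    IsNConnected (m + n + 2) (Join X Y) := by
  obtain ⟨x₀⟩ := hX.1
  obtain ⟨y₀⟩ := hY.1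
  exact ⟨⟨joinPoint x₀ 0 y₀⟩, fun j i hi => subsingleton_homotopyGroup
    (SphereExtends.join (m := m) (n := n) (by omega) (fun _ h => hX.sphereExtends h)
      (fun _ h => hY.sphereExtends h) x₀ y₀) j⟩
end
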